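/- arXiv:1308.3090 — 3 statements merged into one kernel-verified Lean document; each statement's English description precedes it below -/
import Mathlib

section
/- Let X₁, X₂, … be i.i.d. real random variables with a Lebesgue density, mean 0 and variance 1, and let S̄_n := max_{1≤k≤n} (X₁+…+X_k). Then the total variation distance between the distribution of S̄_n/√n and the distribution of |Z| tends to 0 as n → ∞. -/
open MeasureTheory ProbabilityTheory Filter
open scoped ENNReal

/-- The law of `|Z|` for a standard normal `Z` (one-sided standard normal law). -/
noncomputable def halfNormal : Measure ℝ := Measure.map (fun y => |y|) (gaussianReal 0 1)

/-- The total variation distance between the laws of two (finite) measures on `ℝ`,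
as the supremum over Borel sets of the absolute difference of their values. -/
noncomputable def dTV (μ ν : Measure ℝ) : ℝ :=
  ⨆ A : {s : Set ℝ // MeasurableSet s}, |(μ A.1).toReal - (ν A.1).toReal|

open scoped Topology NNReal

/-!
Convergence of all tails plus equi-smoothness under small translations gives convergence in total
variation: convolve with the uniform law on `(0, δ]`, which changes each law little by smoothness
and turns convergence of tails into pointwise convergence of densities (Scheffé).

The tails of `S̄ₙ / √n` converge by the first-passage decomposition at the level `a√n`. After the
first passage the walk is equally likely to go up or down, up to an error and an overshoot of order
`o(√n)`, so `P(S̄ₙ ≥ a√n)` is asymptotically `2 P(Sₙ ≥ a√n)`, and the central limit theorem applies.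

For the smoothness, the maximum is with high probability attained after time `k = n / m`, so it is
the sum of `S_k` and an independent variable and inherits the smoothness of `S_k`. Translating the
law of `S_k` by `t` changes it by `O((|t| + 1) / √k)`: since the step law overlaps its translates by
a small `t`, the total variation distance between the laws of `S_k` and `S_k + j t` satisfies a
discrete heat inequality in `(k, j)`, with value `0` at `j = 0`, and it decreases in `k`.
-/

section TotalVariation

variable {μ ν σ : Measure ℝ} {c : ℝ}

lemma abs_measureReal_sub_le_dTV [IsFiniteMeasure μ] [IsFiniteMeasure ν] {A : Set ℝ}
    (hA : MeasurableSet A) : |μ.real A - ν.real A| ≤ dTV μ ν := by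
  refine le_ciSup (f := fun B : {s : Set ℝ // MeasurableSet s} => |μ.real B - ν.real B|)
    ⟨μ.real .univ + ν.real .univ, ?_⟩ ⟨A, hA⟩
  rintro _ ⟨B, rfl⟩
  refine (abs_sub _ _).trans (add_le_add ?_ ?_) <;>
    simpa only [abs_of_nonneg measureReal_nonneg] using measureReal_mono (Set.subset_univ _)

lemma dTV_le (h : ∀ A, MeasurableSet A → |μ.real A - ν.real A| ≤ c) : dTV μ ν ≤ c :=
  have : Nonempty {s : Set ℝ // MeasurableSet s} := ⟨⟨∅, .empty⟩⟩
  ciSup_le fun A => h A.1 A.2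

lemma dTV_le_of_sub_le [IsProbabilityMeasure μ] [IsProbabilityMeasure ν]
    (h : ∀ A, MeasurableSet A → μ.real A - ν.real A ≤ c) : dTV μ ν ≤ c := by
  refine dTV_le fun A hA => abs_le'.2 ⟨h A hA, ?_⟩
  have := h Aᶜ hA.compl
  rw [probReal_compl_eq_one_sub hA, probReal_compl_eq_one_sub hA] at this
  linarith

lemma dTV_nonneg (μ ν : Measure ℝ) : 0 ≤ dTV μ ν :=
  Real.iSup_nonneg fun _ => abs_nonneg _

@[simp]
lemma dTV_self (μ : Measure ℝ) : dTV μ μ = 0 := by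
  simp [dTV]

lemma dTV_comm (μ ν : Measure ℝ) : dTV μ ν = dTV ν μ := by
  simp only [dTV, abs_sub_comm]

lemma dTV_le_one [IsProbabilityMeasure μ] [IsProbabilityMeasure ν] : dTV μ ν ≤ 1 :=
  dTV_le_of_sub_le fun _ _ => (sub_le_self _ measureReal_nonneg).trans measureReal_le_one

lemma dTV_triangle (μ ν σ : Measure ℝ) [IsFiniteMeasure μ] [IsFiniteMeasure ν]
    [IsFiniteMeasure σ] : dTV μ σ ≤ dTV μ ν + dTV ν σ :=
  dTV_le fun _ hA => (abs_sub_le _ _ _).trans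
    (add_le_add (abs_measureReal_sub_le_dTV hA) (abs_measureReal_sub_le_dTV hA))

lemma dTV_add_le {μ' ν' : Measure ℝ} [IsFiniteMeasure μ] [IsFiniteMeasure ν] [IsFiniteMeasure μ']
    [IsFiniteMeasure ν'] : dTV (μ + μ') (ν + ν') ≤ dTV μ ν + dTV μ' ν' := by
  refine dTV_le fun A hA => ?_
  rw [measureReal_add_apply, measureReal_add_apply, add_sub_add_comm]
  exact (abs_add_le _ _).trans
    (add_le_add (abs_measureReal_sub_le_dTV hA) (abs_measureReal_sub_le_dTV hA))

lemma dTV_map_le [IsFiniteMeasure μ] [IsFiniteMeasure ν] {f : ℝ → ℝ} (hf : Measurable f) :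
    dTV (μ.map f) (ν.map f) ≤ dTV μ ν := by
  refine dTV_le fun A hA => ?_
  rw [map_measureReal_apply hf hA, map_measureReal_apply hf hA]
  exact abs_measureReal_sub_le_dTV (hf hA)

lemma dTV_map_map_le_measureReal_ne {Ω : Type*} [MeasurableSpace Ω] {P : Measure Ω}
    [IsFiniteMeasure P] {X Y : Ω → ℝ} (hX : Measurable X) (hY : Measurable Y) :
    dTV (P.map X) (P.map Y) ≤ P.real {ω | X ω ≠ Y ω} := by
  have key (X Y : Ω → ℝ) (A : Set ℝ) :
      P.real (X ⁻¹' A) ≤ P.real (Y ⁻¹' A) + P.real {ω | X ω ≠ Y ω} := by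
    refine (measureReal_mono fun ω hω => ?_).trans (measureReal_union_le _ _)
    by_cases h : X ω = Y ω
    · exact .inl (by rwa [Set.mem_preimage, ← h])
    · exact .inr h
  refine dTV_le fun A hA => ?_
  rw [map_measureReal_apply hX hA, map_measureReal_apply hY hA, abs_le']
  have hYX := key Y X A
  simp only [ne_comm (a := Y _)] at hYX
  exact ⟨by linarith [key X Y A], by linarith⟩

lemma measureReal_conv_dirac_apply [SFinite μ] {A : Set ℝ} (hA : MeasurableSet A) (t : ℝ) :
    (μ ∗ .dirac t).real A = μ.real ((· + t) ⁻¹' A) := by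
  rw [Measure.conv_dirac, map_measureReal_apply (measurable_add_const t) hA]

lemma integrable_measureReal_preimage_add_const [IsFiniteMeasure μ] [IsFiniteMeasure σ]
    {A : Set ℝ} (hA : MeasurableSet A) :
    Integrable (fun t => μ.real ((· + t) ⁻¹' A)) σ :=
  have hmeas : Measurable fun t => μ ((· + t) ⁻¹' A) :=
    measurable_measure_prodMk_right (measurable_add hA)
  .of_bound hmeas.ennreal_toReal.aestronglyMeasurable (μ.real .univ) <| ae_of_all _ fun _ => by
    simpa only [Real.norm_of_nonneg measureReal_nonneg] using measureReal_mono (Set.subset_univ _)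

lemma measureReal_conv_apply [IsFiniteMeasure μ] [IsFiniteMeasure σ] {A : Set ℝ}
    (hA : MeasurableSet A) : (μ ∗ σ).real A = ∫ t, μ.real ((· + t) ⁻¹' A) ∂σ := by
  have hconv : (μ ∗ σ) A = ∫⁻ t, μ ((· + t) ⁻¹' A) ∂σ :=
    (Measure.map_apply measurable_add hA).trans (Measure.prod_apply_symm (measurable_add hA))
  have hmeas : Measurable fun t => μ ((· + t) ⁻¹' A) :=
    measurable_measure_prodMk_right (measurable_add hA)
  rw [measureReal_def, hconv]
  exact (integral_toReal hmeas.aemeasurable (ae_of_all _ fun _ => measure_lt_top _ _)).symm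

lemma dTV_conv_le [IsFiniteMeasure μ] [IsFiniteMeasure ν] [IsFiniteMeasure σ] :
    dTV (μ ∗ σ) (ν ∗ σ) ≤ σ.real .univ * dTV μ ν := by
  refine dTV_le fun A hA => ?_
  rw [measureReal_conv_apply hA, measureReal_conv_apply hA, ← integral_sub
    (integrable_measureReal_preimage_add_const hA) (integrable_measureReal_preimage_add_const hA),
    mul_comm]
  exact norm_integral_le_of_norm_le_const (f := fun t => μ.real _ - ν.real _)
    (ae_of_all _ fun t => abs_measureReal_sub_le_dTV (measurable_add_const t hA))

end TotalVariation

section ShiftTV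

/-- `shiftTV μ t` is the total variation distance between `μ` and its translate by `t`. It is the
modulus that measures how smooth `μ` is. -/
noncomputable def shiftTV (μ : Measure ℝ) (t : ℝ) : ℝ := dTV μ (μ ∗ .dirac t)

variable {μ σ : Measure ℝ} {t c : ℝ}

lemma shiftTV_nonneg (μ : Measure ℝ) (t : ℝ) : 0 ≤ shiftTV μ t := dTV_nonneg _ _

@[simp]
lemma shiftTV_zero (μ : Measure ℝ) [SFinite μ] : shiftTV μ 0 = 0 := by
  simp [shiftTV]

lemma shiftTV_le_one [IsProbabilityMeasure μ] : shiftTV μ t ≤ 1 := dTV_le_one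

lemma dTV_conv_dirac_conv_dirac_add_le [IsFiniteMeasure μ] (s t : ℝ) :
    dTV (μ ∗ .dirac s) (μ ∗ .dirac (t + s)) ≤ shiftTV μ t := by
  rw [← Measure.dirac_conv_dirac, ← Measure.conv_assoc]
  simpa [shiftTV] using dTV_conv_le (μ := μ) (ν := μ ∗ .dirac t) (σ := .dirac s)

lemma shiftTV_add_le [IsFiniteMeasure μ] (s t : ℝ) :
    shiftTV μ (s + t) ≤ shiftTV μ s + shiftTV μ t :=
  (dTV_triangle _ (μ ∗ .dirac t) _).trans <| by
    rw [add_comm (shiftTV μ s)]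
    exact add_le_add_right (dTV_conv_dirac_conv_dirac_add_le t s) _

lemma shiftTV_nat_mul_le [IsFiniteMeasure μ] (n : ℕ) (t : ℝ) :
    shiftTV μ (n * t) ≤ n * shiftTV μ t := by
  induction n with
  | zero => simp
  | succ n ih =>
    push_cast
    rw [add_one_mul, add_one_mul]
    exact (shiftTV_add_le _ _).trans (add_le_add_left ih _)

lemma shiftTV_conv_le [IsFiniteMeasure μ] [IsProbabilityMeasure σ] (t : ℝ) :
    shiftTV (μ ∗ σ) t ≤ shiftTV μ t := by
  rw [shiftTV, Measure.conv_assoc, Measure.conv_comm σ, ← Measure.conv_assoc]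
  simpa [shiftTV] using dTV_conv_le (μ := μ) (ν := μ ∗ .dirac t) (σ := σ)

lemma shiftTV_map_div_le [IsFiniteMeasure μ] {r : ℝ} (hr : r ≠ 0) (t : ℝ) :
    shiftTV (μ.map (· / r)) t ≤ shiftTV μ (r * t) := by
  have htranslate : μ.map (· / r) ∗ .dirac t = (μ ∗ .dirac (r * t)).map (· / r) := by
    rw [Measure.conv_dirac, Measure.conv_dirac, Measure.map_map (by fun_prop) (by fun_prop),
      Measure.map_map (by fun_prop) (by fun_prop)]
    congr 1
    ext x
    simp [add_div, hr]
  rw [shiftTV, htranslate]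
  exact dTV_map_le (by fun_prop)

lemma shiftTV_le_add_two_mul_dTV {ν : Measure ℝ} [IsFiniteMeasure μ] [IsFiniteMeasure ν] (t : ℝ) :
    shiftTV μ t ≤ shiftTV ν t + 2 * dTV μ ν := by
  have h : dTV (ν ∗ .dirac t) (μ ∗ .dirac t) ≤ dTV μ ν := by
    simpa [dTV_comm] using dTV_conv_le (μ := ν) (ν := μ) (σ := .dirac t)
  have h₁ := dTV_triangle μ ν (μ ∗ .dirac t)
  have h₂ := dTV_triangle ν (ν ∗ .dirac t) (μ ∗ .dirac t)
  simp only [shiftTV]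
  linarith

lemma dTV_conv_le_of_shiftTV_le [IsFiniteMeasure μ] [IsProbabilityMeasure σ]
    (h : ∀ᵐ t ∂σ, shiftTV μ t ≤ c) : dTV μ (μ ∗ σ) ≤ c := by
  refine dTV_le fun A hA => ?_
  have hconst : μ.real A = ∫ _, μ.real A ∂σ := by simp
  rw [measureReal_conv_apply hA, hconst,
    ← integral_sub (integrable_const _) (integrable_measureReal_preimage_add_const hA)]
  have hbound : ∀ᵐ t ∂σ, ‖μ.real A - μ.real ((· + t) ⁻¹' A)‖ ≤ c := h.mono fun t ht => by
    rw [← measureReal_conv_dirac_apply hA]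
    exact (abs_measureReal_sub_le_dTV hA).trans ht
  simpa using norm_integral_le_of_norm_le_const hbound

end ShiftTV

section Overlap

lemma tendsto_eLpNorm_vadd_sub {E : Type*} [NormedAddCommGroup E] {p : ℝ≥0∞} [Fact (1 ≤ p)]
    (hp : p ≠ ∞) {f : ℝ → E} (hf : MemLp f p) :
    Tendsto (fun t : ℝ => eLpNorm (fun x => f (t + x) - f x) p) (𝓝 0) (𝓝 0) := by
  have := Fact.mk hp
  have h : Tendsto (fun t : ℝ => DomAddAct.mk t +ᵥ hf.toLp f) (𝓝 0) (𝓝 (hf.toLp f)) := by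
    have : Continuous fun t : ℝ => DomAddAct.mk t +ᵥ hf.toLp f := by fun_prop
    simpa using this.tendsto 0
  refine (tendsto_iff_edist_tendsto_0.1 h).congr fun t => ?_
  rw [DomAddAct.mk_vadd_toLp, Lp.edist_toLp_toLp]
  rfl

/-- The part of the absolutely continuous component of `μ` that is still dominated by `μ` after
a translation by `t`. -/
noncomputable def overlap (μ : Measure ℝ) (t : ℝ) : Measure ℝ :=
  volume.withDensity fun x => min (μ.rnDeriv volume x) (μ.rnDeriv volume (t + x))

variable {μ : Measure ℝ}

lemma overlap_le (t : ℝ) : overlap μ t ≤ μ :=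
  (withDensity_mono (ae_of_all _ fun _ => min_le_left _ _)).trans
    (Measure.withDensity_rnDeriv_le _ _)

instance [IsFiniteMeasure μ] (t : ℝ) : IsFiniteMeasure (overlap μ t) :=
  isFiniteMeasure_of_le μ (overlap_le t)

lemma overlap_conv_dirac_le [IsFiniteMeasure μ] (t : ℝ) : overlap μ t ∗ .dirac t ≤ μ := by
  refine le_trans (Measure.le_iff.2 fun A hA => ?_) (Measure.withDensity_rnDeriv_le μ volume)
  have hA' : MeasurableSet ((t + ·) ⁻¹' A) := measurable_const_add t hA
  rw [Measure.conv_comm, Measure.dirac_conv, Measure.map_apply (measurable_const_add t) hA, overlap,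
    withDensity_apply _ hA', withDensity_apply _ hA,
    ← (measurePreserving_add_left volume t).setLIntegral_comp_preimage hA (by fun_prop)]
  exact lintegral_mono fun _ => min_le_right _ _

lemma tendsto_overlap_univ [IsFiniteMeasure μ] :
    Tendsto (fun t => overlap μ t .univ) (𝓝 0)
      (𝓝 (volume.withDensity (μ.rnDeriv volume) .univ)) := by
  set g := μ.rnDeriv volume
  have htranslate := tendsto_eLpNorm_vadd_sub ENNReal.one_ne_top (f := fun x => (g x).toReal)
    (memLp_one_iff_integrable.2 Measure.integrable_toReal_rnDeriv)
  have hfin : volume.withDensity g .univ ≠ ∞ :=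
    ne_top_of_le_ne_top (measure_ne_top μ _) (Measure.withDensity_rnDeriv_le _ _ _)
  have hlower (t : ℝ) : volume.withDensity g .univ -
      eLpNorm (fun x => (g (t + x)).toReal - (g x).toReal) 1 ≤ overlap μ t .univ := by
    have hpointwise : ∀ᵐ x, g x ≤
        min (g x) (g (t + x)) + ‖(g (t + x)).toReal - (g x).toReal‖ₑ := by
      have hlt : ∀ᵐ x, g x < ∞ := Measure.rnDeriv_lt_top μ volume
      filter_upwards [hlt, (quasiMeasurePreserving_add_left volume t).ae hlt] with x hx htx
      rcases min_choice (g x) (g (t + x)) with h | h <;> rw [h]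
      · exact le_self_add
      · rw [← ENNReal.ofReal_toReal hx.ne, ← ENNReal.ofReal_toReal htx.ne, Real.enorm_eq_ofReal_abs,
          ← ENNReal.ofReal_add ENNReal.toReal_nonneg (abs_nonneg _),
          ENNReal.toReal_ofReal ENNReal.toReal_nonneg, ENNReal.toReal_ofReal ENNReal.toReal_nonneg]
        refine ENNReal.ofReal_le_ofReal ?_
        linarith [neg_abs_le ((g (t + x)).toReal - (g x).toReal)]
    rw [tsub_le_iff_right, overlap, withDensity_apply _ .univ, withDensity_apply _ .univ,
      eLpNorm_one_eq_lintegral_enorm, Measure.restrict_univ, ← lintegral_add_left (by fun_prop)]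
    exact lintegral_mono_ae hpointwise
  refine tendsto_of_tendsto_of_tendsto_of_le_of_le ?_ tendsto_const_nhds hlower
    fun t => withDensity_mono (ae_of_all _ fun _ => min_le_left _ _) _
  simpa using ENNReal.Tendsto.sub tendsto_const_nhds htranslate (.inl hfin)

lemma dTV_le_one_sub_of_le {ν κ : Measure ℝ} [IsProbabilityMeasure μ] [IsProbabilityMeasure ν]
    (hμ : κ ≤ μ) (hν : κ ≤ ν) : dTV μ ν ≤ 1 - κ.real .univ := by
  have := isFiniteMeasure_of_le μ hμ
  refine dTV_le_of_sub_le fun A hA => ?_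
  have hκν : κ.real A ≤ ν.real A := ENNReal.toReal_mono (measure_ne_top ν A) (hν A)
  have hκμ : κ.real Aᶜ ≤ μ.real Aᶜ := ENNReal.toReal_mono (measure_ne_top μ _) (hμ _)
  rw [probReal_compl_eq_one_sub (μ := μ) hA] at hκμ
  linarith [measureReal_add_measureReal_compl (μ := κ) hA]

lemma tendsto_shiftTV_of_absolutelyContinuous [IsProbabilityMeasure μ] (hμ : μ ≪ volume) :
    Tendsto (shiftTV μ) (𝓝 0) (𝓝 0) := by
  have hle (t : ℝ) : shiftTV μ t ≤ 1 - (overlap μ t).real .univ := by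
    have hmass : (overlap μ t ∗ .dirac t).real .univ = (overlap μ t).real .univ :=
      measureReal_conv_dirac_apply .univ t
    rw [← hmass]
    refine dTV_le_one_sub_of_le (overlap_conv_dirac_le t) ?_
    rw [Measure.conv_dirac, Measure.conv_dirac]
    exact Measure.map_mono (overlap_le t) (measurable_add_const t)
  have hlim : Tendsto (fun t => 1 - (overlap μ t).real .univ) (𝓝 0) (𝓝 (1 - 1)) := by
    have h := tendsto_overlap_univ (μ := μ)
    rw [Measure.withDensity_rnDeriv_eq _ _ hμ, measure_univ] at h
    exact ((ENNReal.tendsto_toReal ENNReal.one_ne_top).comp h).const_sub 1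
  rw [sub_self] at hlim
  exact squeeze_zero (shiftTV_nonneg μ) hle hlim

lemma exists_eventually_add_conv_dirac_le_of_not_mutuallySingular [IsFiniteMeasure μ]
    (hμ : ¬ μ ⟂ₘ volume) : ∃ q > 0, ∀ᶠ t in 𝓝 0, ∃ ν : Measure ℝ,
      IsFiniteMeasure ν ∧ ν + ν ∗ .dirac t ≤ μ ∧ q ≤ ν.real .univ := by
  set m := (volume.withDensity (μ.rnDeriv volume)).real .univ
  have hfin : volume.withDensity (μ.rnDeriv volume) .univ ≠ ∞ :=
    ne_top_of_le_ne_top (measure_ne_top μ _) (Measure.withDensity_rnDeriv_le _ _ _)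
  have hm : 0 < m := ENNReal.toReal_pos (fun h => hμ <|
    (Measure.withDensity_rnDeriv_eq_zero _ _).1 <| Measure.measure_univ_eq_zero.1 h) hfin
  refine ⟨m / 4, by positivity, ?_⟩
  have hlim : Tendsto (fun t => (overlap μ t).real .univ) (𝓝 0) (𝓝 m) :=
    (ENNReal.tendsto_toReal hfin).comp tendsto_overlap_univ
  filter_upwards [hlim.eventually_const_lt (half_lt_self hm)] with t ht
  refine ⟨(2⁻¹ : ℝ≥0) • overlap μ t, inferInstance, ?_, ?_⟩
  · calc (2⁻¹ : ℝ≥0) • overlap μ t + ((2⁻¹ : ℝ≥0) • overlap μ t) ∗ .dirac t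
      _ = (2⁻¹ : ℝ≥0) • overlap μ t + (2⁻¹ : ℝ≥0) • (overlap μ t ∗ .dirac t) := by
        rw [ENNReal.smul_def, ENNReal.smul_def, Measure.conv_smul_left]
      _ ≤ (2⁻¹ : ℝ≥0) • μ + (2⁻¹ : ℝ≥0) • μ := by
        gcongr
        · exact overlap_le t
        · exact overlap_conv_dirac_le t
      _ = μ := by rw [← add_smul]; norm_num
  · simp only [measureReal_nnreal_smul_apply]
    push_cast
    linarith

end Overlap

section ConvolutionPowers

lemma sum_range_le_of_laplacian_le {a : ℕ → ℕ → ℝ} {q : ℝ} (hq₀ : 0 < q) (hq₁ : q ≤ 1)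
    (h_zero : ∀ i, a i 0 = 0) (h_le : ∀ i j, a i j ≤ 1)
    (h_step : ∀ i j, a (i + 1) (j + 1) ≤ (1 - q) * a i (j + 1) + q / 2 * (a i (j + 2) + a i j))
    (k : ℕ) {R j : ℕ} (hj : j ≤ R) :
    ∑ i ∈ Finset.range k, a i j ≤ k * j / R + j * (R - j) / q := by
  rcases R.eq_zero_or_pos with rfl | hR
  · simp [Nat.le_zero.1 hj, h_zero]
  have hR' : (0 : ℝ) < R := mod_cast hR
  induction k generalizing j with
  | zero =>
    have : (0 : ℝ) ≤ R - j := sub_nonneg.2 (mod_cast hj)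
    simp only [Finset.range_zero, Finset.sum_empty]
    positivity
  | succ k ih =>
    rcases j with _ | j
    · simp [h_zero]
    rcases hj.eq_or_lt with rfl | hj
    · have : ∑ i ∈ Finset.range (k + 1), a i (j + 1) ≤ k + 1 := by
        simpa using Finset.sum_le_sum fun i (_ : i ∈ Finset.range (k + 1)) => h_le i (j + 1)
      push_cast at hR' ⊢
      simpa [hR'.ne'] using this
    rw [Finset.sum_range_succ']
    have hsum : ∑ i ∈ Finset.range k, a (i + 1) (j + 1) ≤
        (1 - q) * ∑ i ∈ Finset.range k, a i (j + 1) +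
          q / 2 * (∑ i ∈ Finset.range k, a i (j + 2) + ∑ i ∈ Finset.range k, a i j) := by
      rw [← Finset.sum_add_distrib, Finset.mul_sum, Finset.mul_sum, ← Finset.sum_add_distrib]
      exact Finset.sum_le_sum fun i _ => h_step i j
    -- The bound solves the summed recursion with equality, as in a discrete maximum principle.
    have hsolution : 1 + ((1 - q) * (k * (j + 1) / R + (j + 1) * (R - (j + 1)) / q) +
        q / 2 * ((k * (j + 2) / R + (j + 2) * (R - (j + 2)) / q) + (k * j / R + j * (R - j) / q)))
        = k * (j + 1) / R + (j + 1) * (R - (j + 1)) / q := by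
      field_simp
      ring
    have h₁ := mul_le_mul_of_nonneg_left (ih hj.le) (sub_nonneg.2 hq₁)
    have h₂ := mul_le_mul_of_nonneg_left (add_le_add (ih (j := j + 2) hj) (ih (by lia : j ≤ R)))
      (half_pos hq₀).le
    have h₃ : (k : ℝ) * (j + 1) / R ≤ (k + 1) * (j + 1) / R := by gcongr; linarith
    push_cast at h₁ h₂ ⊢
    linarith [h_le 0 (j + 1)]

lemma mul_sqrt_le_of_antitone {a : ℕ → ℕ → ℝ} {q : ℝ} (hq₀ : 0 < q) (hq₁ : q ≤ 1)
    (h_zero : ∀ i, a i 0 = 0) (h_le : ∀ i j, a i j ≤ 1)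
    (h_step : ∀ i j, a (i + 1) (j + 1) ≤ (1 - q) * a i (j + 1) + q / 2 * (a i (j + 2) + a i j))
    (h_anti : ∀ j, Antitone (a · j)) (k : ℕ) : √k * a k 1 ≤ 1 + 1 / q := by
  rcases k.eq_zero_or_pos with rfl | hk
  · have : 0 ≤ 1 + 1 / q := by positivity
    simpa using this
  have hk' : 0 < √(k : ℝ) := by positivity
  have hsq : √(k : ℝ) * √k = k := Real.mul_self_sqrt (Nat.cast_nonneg k)
  set R := ⌈√(k : ℝ)⌉₊
  have hR : √(k : ℝ) ≤ R := Nat.le_ceil _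
  have hR' : (R : ℝ) - 1 ≤ √k := by linarith [Nat.ceil_lt_add_one hk'.le]
  have hR₁ : 1 ≤ R := Nat.one_le_ceil_iff.2 hk'
  have hsum := sum_range_le_of_laplacian_le hq₀ hq₁ h_zero h_le h_step k hR₁
  have hlast : k * a k 1 ≤ ∑ i ∈ Finset.range k, a i 1 := by
    simpa using Finset.card_nsmul_le_sum (Finset.range k) (a · 1) (a k 1)
      fun i hi => h_anti 1 (Finset.mem_range.1 hi).le
  refine le_of_mul_le_mul_left ?_ hk'
  calc √k * (√k * a k 1) = k * a k 1 := by rw [← mul_assoc, hsq]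
    _ ≤ k / R + (R - 1) / q := by simpa using hlast.trans hsum
    _ ≤ k / √k + √k / q := by gcongr
    _ = √k * (1 + 1 / q) := by rw [Real.div_sqrt]; ring

/-- The `k`-fold convolution power of `μ`, that is, the law of a random walk at time `k`. -/
noncomputable def convPow (μ : Measure ℝ) : ℕ → Measure ℝ
  | 0 => .dirac 0
  | k + 1 => convPow μ k ∗ μ

variable {μ ν σ : Measure ℝ} {s t : ℝ}

instance [IsProbabilityMeasure μ] (k : ℕ) : IsProbabilityMeasure (convPow μ k) := by
  induction k with
  | zero => exact Measure.dirac.isProbabilityMeasure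
  | succ k ih => exact inferInstanceAs (IsProbabilityMeasure (convPow μ k ∗ μ))

lemma convPow_add (μ : Measure ℝ) [IsProbabilityMeasure μ] (m n : ℕ) :
    convPow μ (m + n) = convPow μ m ∗ convPow μ n := by
  induction n with
  | zero => simp [convPow]
  | succ n ih => rw [← add_assoc, convPow, ih, convPow, Measure.conv_assoc]

lemma convPow_mul (μ : Measure ℝ) [IsProbabilityMeasure μ] (m n : ℕ) :
    convPow μ (m * n) = convPow (convPow μ m) n := by
  induction n with
  | zero => rfl
  | succ n ih => rw [mul_add_one, convPow_add, ih, convPow]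

lemma antitone_shiftTV_convPow [IsProbabilityMeasure μ] (t : ℝ) :
    Antitone fun k => shiftTV (convPow μ k) t :=
  antitone_nat_of_succ_le fun _ => shiftTV_conv_le t

/-- Splitting off `ν` with weight `1/2` on the atoms `0` and `t` lets a step of law `μ` compare
the translation `s` with its neighbours `s ± t`. -/
lemma shiftTV_conv_le_of_add_conv_dirac_le [IsFiniteMeasure σ] [IsProbabilityMeasure μ]
    [IsFiniteMeasure ν] (hν : ν + ν ∗ .dirac t ≤ μ) (s : ℝ) :
    shiftTV (σ ∗ μ) s ≤ (1 - 2 * ν.real .univ) * shiftTV σ s +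
      ν.real .univ * (shiftTV σ (s + t) + shiftTV σ (s - t)) := by
  set ρ := μ - (ν + ν ∗ .dirac t)
  have hμ : μ = ρ + (ν + ν ∗ .dirac t) := (Measure.sub_add_cancel_of_le hν).symm
  have hρ : ρ.real .univ = 1 - 2 * ν.real .univ := by
    have hmass : (ν ∗ .dirac t).real .univ = ν.real .univ := measureReal_conv_dirac_apply .univ t
    have : μ.real .univ = ρ.real .univ + (ν.real .univ + (ν ∗ .dirac t).real .univ) := by
      rw [← measureReal_add_apply, ← measureReal_add_apply, ← hμ]
    rw [probReal_univ, hmass] at this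
    linarith
  have hleft : σ ∗ μ = σ ∗ ρ + (σ ∗ ν + (σ ∗ .dirac t) ∗ ν) := by
    rw [hμ, Measure.conv_add, Measure.conv_add, Measure.conv_comm ν, Measure.conv_assoc]
  have hright : (σ ∗ μ) ∗ .dirac s =
      (σ ∗ .dirac s) ∗ ρ + ((σ ∗ .dirac (s + t)) ∗ ν + (σ ∗ .dirac s) ∗ ν) := by
    rw [Measure.conv_assoc, Measure.conv_comm μ, ← Measure.conv_assoc, hμ, Measure.conv_add,
      Measure.conv_add, Measure.conv_comm ν, ← Measure.conv_assoc _ (.dirac t),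
      Measure.conv_assoc _ _ (.dirac t), Measure.dirac_conv_dirac,
      add_comm (_ ∗ ν) ((σ ∗ .dirac (s + t)) ∗ ν)]
  have hback : dTV (σ ∗ .dirac t) (σ ∗ .dirac s) ≤ shiftTV σ (s - t) := by
    simpa using dTV_conv_dirac_conv_dirac_add_le (μ := σ) t (s - t)
  rw [shiftTV, hright, hleft]
  calc _ ≤ ρ.real .univ * shiftTV σ s + (ν.real .univ * shiftTV σ (s + t) +
        ν.real .univ * dTV (σ ∗ .dirac t) (σ ∗ .dirac s)) :=
        dTV_add_le.trans (add_le_add dTV_conv_le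
          (dTV_add_le.trans (add_le_add dTV_conv_le dTV_conv_le)))
    _ ≤ _ := by rw [hρ, mul_add]; gcongr

lemma sqrt_mul_shiftTV_convPow_le [IsProbabilityMeasure μ] [IsFiniteMeasure ν]
    (hν : ν + ν ∗ .dirac t ≤ μ) (hν₀ : 0 < ν.real .univ) (k : ℕ) :
    √k * shiftTV (convPow μ k) t ≤ 1 + 1 / (2 * ν.real .univ) := by
  have hmass : ν.real .univ + (ν ∗ .dirac t).real .univ ≤ 1 := by
    rw [← measureReal_add_apply, ← probReal_univ (μ := μ)]
    exact ENNReal.toReal_mono (measure_ne_top μ _) (hν _)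
  have : (ν ∗ .dirac t).real .univ = ν.real .univ := measureReal_conv_dirac_apply .univ t
  have h := mul_sqrt_le_of_antitone (a := fun i j => shiftTV (convPow μ i) (j * t))
    (q := 2 * ν.real .univ) (by positivity) (by linarith) (by simp) (fun _ _ => shiftTV_le_one)
    (fun i j => ?_) (fun j => antitone_shiftTV_convPow _) k
  · simpa using h
  · have := shiftTV_conv_le_of_add_conv_dirac_le (σ := convPow μ i) hν ((j + 1 : ℕ) * t)
    convert! this using 3
    · ring
    · push_cast; ring_nf

lemma exists_sqrt_mul_shiftTV_convPow_le_of_not_mutuallySingular [IsProbabilityMeasure μ]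
    (hμ : ¬ μ ⟂ₘ volume) :
    ∃ C, ∀ (k : ℕ) (t : ℝ), √k * shiftTV (convPow μ k) t ≤ C * (|t| + 1) := by
  obtain ⟨q, hq, hev⟩ := exists_eventually_add_conv_dirac_le_of_not_mutuallySingular hμ
  obtain ⟨L, hL, hball⟩ := Metric.eventually_nhds_iff.1 hev
  set D := 1 + 1 / (2 * q)
  have hsmall (k : ℕ) (t : ℝ) (ht : |t| < L) : √k * shiftTV (convPow μ k) t ≤ D := by
    obtain ⟨ν, _, hν, hqν⟩ := hball (by simpa using ht)
    exact (sqrt_mul_shiftTV_convPow_le hν (hq.trans_le hqν) k).trans (by simp only [D]; gcongr)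
  refine ⟨(1 / L + 1) * D, fun k t => ?_⟩
  set n := ⌊|t| / L⌋₊ + 1
  have hn : |t| / L < n := mod_cast Nat.lt_floor_add_one _
  have hn' : (n : ℝ) ≤ |t| / L + 1 := by
    push_cast [n]
    gcongr
    exact Nat.floor_le (by positivity)
  have hn₀ : (0 : ℝ) < n := by positivity
  have htn : |t / n| < L := by
    rw [abs_div, Nat.abs_cast, div_lt_iff₀ hn₀]
    rwa [div_lt_iff₀' hL] at hn
  calc √k * shiftTV (convPow μ k) t
      = √k * shiftTV (convPow μ k) (n * (t / n)) := by rw [mul_div_cancel₀ _ hn₀.ne']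
    _ ≤ √k * (n * shiftTV (convPow μ k) (t / n)) := by gcongr; exact shiftTV_nat_mul_le _ _
    _ = n * (√k * shiftTV (convPow μ k) (t / n)) := by ring
    _ ≤ (|t| / L + 1) * D :=
      mul_le_mul hn' (hsmall k _ htn) (mul_nonneg (Real.sqrt_nonneg _) (shiftTV_nonneg _ _))
        (by positivity)
    _ ≤ (1 / L + 1) * D * (|t| + 1) := by
      have : |t| / L + 1 ≤ (1 / L + 1) * (|t| + 1) := by
        field_simp
        nlinarith [abs_nonneg t]
      nlinarith [show 0 < D by positivity]

lemma exists_sqrt_mul_shiftTV_convPow_le [IsProbabilityMeasure μ]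
    (hμ : ∃ r, ¬ convPow μ r ⟂ₘ volume) :
    ∃ C, ∀ (k : ℕ) (t : ℝ), √k * shiftTV (convPow μ k) t ≤ C * (|t| + 1) := by
  obtain ⟨r, hr⟩ := hμ
  obtain ⟨C, hC⟩ := exists_sqrt_mul_shiftTV_convPow_le_of_not_mutuallySingular hr
  have hr₀ : 0 < r := Nat.pos_of_ne_zero fun h => hr <| h ▸ mutuallySingular_dirac 0 volume
  refine ⟨√r * (C + 1), fun k t => ?_⟩
  set m := k / r
  set d := shiftTV (convPow (convPow μ r) m) t
  have hsqrt : √(k : ℝ) ≤ √r * (√m + 1) := by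
    have hk : (k : ℝ) ≤ r * (m + 1) := mod_cast (Nat.lt_mul_div_succ k hr₀).le
    have hm : √((m : ℝ) + 1) ≤ √m + 1 := Real.sqrt_le_iff.2
      ⟨by positivity, by nlinarith [Real.sq_sqrt (Nat.cast_nonneg (α := ℝ) m), Real.sqrt_nonneg m]⟩
    calc √(k : ℝ) ≤ √(r * (m + 1)) := Real.sqrt_le_sqrt hk
      _ = √r * √(m + 1) := Real.sqrt_mul (Nat.cast_nonneg r) _
      _ ≤ √r * (√m + 1) := by gcongr
  have hshift : shiftTV (convPow μ k) t ≤ d := by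
    simp only [d, ← convPow_mul]
    exact antitone_shiftTV_convPow t (Nat.mul_div_le k r)
  have hd : d ≤ |t| + 1 := shiftTV_le_one.trans (by linarith [abs_nonneg t])
  calc √k * shiftTV (convPow μ k) t ≤ √r * (√m + 1) * d :=
        mul_le_mul hsqrt hshift (shiftTV_nonneg _ _) (by positivity)
    _ = √r * (√m * d + d) := by ring
    _ ≤ √r * (C * (|t| + 1) + (|t| + 1)) :=
      mul_le_mul_of_nonneg_left (add_le_add (hC m t) hd) (Real.sqrt_nonneg _)
    _ = √r * (C + 1) * (|t| + 1) := by ring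

end ConvolutionPowers

section Smoothing

variable {ι : Type*} {l : Filter ι}

lemma tendsto_dTV_withDensity [l.IsCountablyGenerated] {f : ι → ℝ → ℝ≥0∞} {g : ℝ → ℝ≥0∞}
    [∀ i, IsProbabilityMeasure (volume.withDensity (f i))]
    [IsProbabilityMeasure (volume.withDensity g)] (hf : ∀ i, Measurable (f i)) (hg : Measurable g)
    (hlim : ∀ x, Tendsto (f · x) l (𝓝 (g x))) :
    Tendsto (fun i => dTV (volume.withDensity (f i)) (volume.withDensity g)) l (𝓝 0) := by
  have hg₁ : ∫⁻ x, g x = 1 := by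
    rw [← setLIntegral_univ, ← withDensity_apply _ .univ, measure_univ]
  have hmin : Tendsto (fun i => ∫⁻ x, min (f i x) (g x)) l (𝓝 1) := by
    rw [← hg₁]
    refine tendsto_lintegral_filter_of_dominated_convergence g
      (.of_forall fun i => (hf i).min hg)
      (.of_forall fun i => ae_of_all _ fun x => min_le_right _ _)
      (by simp [hg₁]) (ae_of_all _ fun x => ?_)
    simpa using (hlim x).min (tendsto_const_nhds (x := g x))
  have hle (i : ι) : dTV (volume.withDensity (f i)) (volume.withDensity g) ≤
      1 - (∫⁻ x, min (f i x) (g x)).toReal := by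
    have := dTV_le_one_sub_of_le (κ := volume.withDensity fun x => min (f i x) (g x))
      (withDensity_mono (ae_of_all volume fun _ => min_le_left (f i _) (g _)))
      (withDensity_mono (ae_of_all volume fun _ => min_le_right (f i _) (g _)))
    simpa [measureReal_def] using this
  refine squeeze_zero (fun _ => dTV_nonneg _ _) hle ?_
  simpa using ((ENNReal.tendsto_toReal ENNReal.one_ne_top).comp hmin).const_sub 1

lemma conv_withDensity {μ : Measure ℝ} [SFinite μ] {f : ℝ → ℝ≥0∞} (hf : Measurable f)
    [SFinite (volume.withDensity f)] :
    μ ∗ volume.withDensity f = volume.withDensity fun z => ∫⁻ x, f (z - x) ∂μ := by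
  refine Measure.ext_of_lintegral _ fun φ hφ => ?_
  rw [Measure.lintegral_conv hφ, lintegral_withDensity_eq_lintegral_mul _
    (Measurable.lintegral_prod_right' (by fun_prop : Measurable fun p : ℝ × ℝ => f (p.1 - p.2))) hφ]
  have hinner (x : ℝ) : ∫⁻ y, φ (x + y) ∂volume.withDensity f = ∫⁻ z, f (z - x) * φ z := by
    rw [lintegral_withDensity_eq_lintegral_mul _ hf (by fun_prop),
      ← lintegral_sub_right_eq_self _ x]
    simp
  have houter (z : ℝ) : (∫⁻ x, f (z - x) ∂μ) * φ z = ∫⁻ x, f (z - x) * φ z ∂μ :=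
    (lintegral_mul_const _ (by fun_prop)).symm
  simp_rw [hinner, Pi.mul_apply, houter]
  exact lintegral_lintegral_swap (by fun_prop)

lemma conv_cond_volume_Ioc {μ : Measure ℝ} [SFinite μ] {δ : ℝ} :
    μ ∗ volume[|Set.Ioc 0 δ] =
      volume.withDensity fun z => (ENNReal.ofReal δ)⁻¹ * μ (Set.Ico (z - δ) z) := by
  have hcond : volume[|Set.Ioc 0 δ] =
      volume.withDensity ((Set.Ioc 0 δ).indicator fun _ => (ENNReal.ofReal δ)⁻¹) := by
    rw [withDensity_indicator measurableSet_Ioc, withDensity_const, ProbabilityTheory.cond,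
      Real.volume_Ioc, sub_zero]
  have : SFinite (volume.withDensity ((Set.Ioc 0 δ).indicator fun _ => (ENNReal.ofReal δ)⁻¹)) :=
    hcond ▸ inferInstance
  rw [hcond, conv_withDensity (measurable_const.indicator measurableSet_Ioc)]
  congr with z
  have hpre (x : ℝ) : (Set.Ioc 0 δ).indicator (fun _ => (ENNReal.ofReal δ)⁻¹) (z - x) =
      (Set.Ico (z - δ) z).indicator (fun _ => (ENNReal.ofReal δ)⁻¹) x := by
    simp only [Set.indicator_apply, Set.mem_Ioc, Set.mem_Ico, sub_pos, sub_le_comm, and_comm]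
  simp_rw [hpre, lintegral_indicator_const measurableSet_Ico]

lemma tendsto_dTV_conv_cond_volume_Ioc [l.IsCountablyGenerated] {μs : ι → Measure ℝ}
    {μ : Measure ℝ} [∀ i, IsProbabilityMeasure (μs i)] [IsProbabilityMeasure μ]
    (htail : ∀ a, Tendsto (fun i => (μs i).real (Set.Ici a)) l (𝓝 (μ.real (Set.Ici a))))
    {δ : ℝ} (hδ : 0 < δ) :
    Tendsto (fun i => dTV (μs i ∗ volume[|Set.Ioc 0 δ]) (μ ∗ volume[|Set.Ioc 0 δ])) l (𝓝 0) := by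
  have hprob : IsProbabilityMeasure (volume[|Set.Ioc 0 δ]) :=
    cond_isProbabilityMeasure_of_finite (by simpa using hδ) (by simp)
  have hIco (ν : Measure ℝ) [IsProbabilityMeasure ν] (z : ℝ) : ν (Set.Ico (z - δ) z) =
      ENNReal.ofReal (ν.real (Set.Ici (z - δ)) - ν.real (Set.Ici z)) := by
    rw [← measureReal_sdiff (Set.Ici_subset_Ici.2 (by linarith)) measurableSet_Ici,
      Set.Ici_sdiff_Ici, ofReal_measureReal]
  have hmeas (ν : Measure ℝ) [IsProbabilityMeasure ν] :
      Measurable fun z => (ENNReal.ofReal δ)⁻¹ * ν (Set.Ico (z - δ) z) := by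
    have hanti : Antitone fun z => ν.real (Set.Ici z) :=
      fun _ _ h => measureReal_mono (Set.Ici_subset_Ici.2 h)
    simp_rw [hIco]
    exact ((hanti.measurable.comp (measurable_sub_const δ)).sub
      hanti.measurable).ennreal_ofReal.const_mul _
  have hinst (ν : Measure ℝ) [IsProbabilityMeasure ν] : IsProbabilityMeasure
      (volume.withDensity fun z => (ENNReal.ofReal δ)⁻¹ * ν (Set.Ico (z - δ) z)) :=
    conv_cond_volume_Ioc (μ := ν) (δ := δ) ▸ inferInstance
  simp_rw [conv_cond_volume_Ioc]
  refine tendsto_dTV_withDensity (fun i => hmeas (μs i)) (hmeas μ) fun z => ?_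
  simp_rw [hIco]
  exact ENNReal.Tendsto.const_mul (ENNReal.tendsto_ofReal ((htail _).sub (htail _)))
    (.inr (by simpa using hδ))

lemma tendsto_dTV_of_tendsto_measureReal_Ici [l.IsCountablyGenerated] {μs : ι → Measure ℝ}
    {μ : Measure ℝ} [∀ i, IsProbabilityMeasure (μs i)] [IsProbabilityMeasure μ] (hμ : μ ≪ volume)
    (htail : ∀ a, Tendsto (fun i => (μs i).real (Set.Ici a)) l (𝓝 (μ.real (Set.Ici a))))
    (hsmooth : ∀ ε > 0, ∃ δ > 0, ∀ᶠ i in l, ∀ t ∈ Set.Ioc 0 δ, shiftTV (μs i) t ≤ ε) :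
    Tendsto (fun i => dTV (μs i) μ) l (𝓝 0) := by
  refine tendsto_order.2 ⟨fun c hc => .of_forall fun _ => hc.trans_le (dTV_nonneg _ _),
    fun ε hε => ?_⟩
  obtain ⟨δ₁, hδ₁, hμs⟩ := hsmooth (ε / 4) (by positivity)
  obtain ⟨δ₂, hδ₂, hμδ⟩ := Metric.eventually_nhds_iff.1 <|
    (tendsto_shiftTV_of_absolutelyContinuous hμ).eventually_le_const
      (show (0 : ℝ) < ε / 4 by positivity)
  obtain ⟨δ, hδ, hδ₁₂⟩ := exists_between (lt_min hδ₁ hδ₂)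
  set U := volume[|Set.Ioc 0 δ]
  have hU : IsProbabilityMeasure U :=
    cond_isProbabilityMeasure_of_finite (by simpa using hδ) (by simp)
  have hU_mem : ∀ᵐ t ∂U, t ∈ Set.Ioc 0 δ := ae_cond_mem measurableSet_Ioc
  have hμU : dTV (μ ∗ U) μ ≤ ε / 4 := by
    refine dTV_comm μ (μ ∗ U) ▸ dTV_conv_le_of_shiftTV_le (hU_mem.mono fun t ht => hμδ ?_)
    rw [Real.dist_0_eq_abs, abs_of_pos ht.1]
    exact ht.2.trans_lt (hδ₁₂.trans_le (min_le_right _ _))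
  filter_upwards [hμs, (tendsto_dTV_conv_cond_volume_Ioc htail hδ).eventually_lt_const
    (show (0 : ℝ) < ε / 4 by positivity)] with i hi hiU
  have hμsU : dTV (μs i) (μs i ∗ U) ≤ ε / 4 :=
    dTV_conv_le_of_shiftTV_le (hU_mem.mono fun t ht =>
      hi t ⟨ht.1, ht.2.trans (hδ₁₂.le.trans (min_le_left _ _))⟩)
  linarith [dTV_triangle (μs i) (μs i ∗ U) μ, dTV_triangle (μs i ∗ U) (μ ∗ U) μ]

end Smoothing

section NormalTail

lemma continuous_measureReal_Ici (μ : Measure ℝ) [IsFiniteMeasure μ] [NullSingletonClass μ] :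
    Continuous fun a => μ.real (Set.Ici a) := by
  refine continuous_iff_continuousAt.2 fun a =>
    (ENNReal.tendsto_toReal (measure_ne_top μ _)).comp <|
    tendsto_measure_of_ae_tendsto_indicator_of_isFiniteMeasure (𝓝 a) measurableSet_Ici
      (fun _ => measurableSet_Ici) ?_
  filter_upwards [Measure.ae_ne μ a] with x hx
  rcases hx.lt_or_gt with hxa | hax
  · filter_upwards [lt_mem_nhds hxa] with b hb
    simp [hb.not_ge, hxa.not_ge]
  · filter_upwards [gt_mem_nhds hax] with b hb
    simp [hax.le, hb.le]

lemma tendsto_measureReal_Ici_atTop (μ : Measure ℝ) [IsFiniteMeasure μ] :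
    Tendsto (fun a => μ.real (Set.Ici a)) atTop (𝓝 0) := by
  rw [← measureReal_empty (μ := μ)]
  refine (ENNReal.tendsto_toReal (measure_ne_top μ _)).comp <|
    tendsto_measure_of_tendsto_indicator_of_isFiniteMeasure atTop μ
      (fun _ => measurableSet_Ici) fun x => ?_
  filter_upwards [eventually_gt_atTop x] with b hb
  simp [hb]

lemma tendsto_measureReal_Ici_atBot (μ : Measure ℝ) [IsProbabilityMeasure μ] :
    Tendsto (fun a => μ.real (Set.Ici a)) atBot (𝓝 1) := by
  rw [← probReal_univ (μ := μ)]
  exact (ENNReal.tendsto_toReal (measure_ne_top μ _)).comp (tendsto_measure_Ici_atBot μ)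

lemma gaussianReal_real_Iic_neg (v : ℝ≥0) (a : ℝ) :
    (gaussianReal 0 v).real (Set.Iic (-a)) = (gaussianReal 0 v).real (Set.Ici a) := by
  have hneg : (gaussianReal 0 v).map (fun x => -x) = gaussianReal 0 v := by
    simpa only [neg_zero] using gaussianReal_map_neg (μ := 0) (v := v)
  conv_rhs => rw [← hneg, map_measureReal_apply measurable_neg measurableSet_Ici]
  congr 1
  ext x
  simp

lemma gaussianReal_real_Ici_zero {v : ℝ≥0} (hv : v ≠ 0) :
    (gaussianReal 0 v).real (Set.Ici 0) = 1 / 2 := by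
  have := nullSingletonClass_gaussianReal (μ := 0) hv
  have hcompl : (gaussianReal 0 v).real (Set.Iic 0) = 1 - (gaussianReal 0 v).real (Set.Ici 0) := by
    rw [← Set.compl_Ioi, probReal_compl_eq_one_sub measurableSet_Ioi,
      measureReal_congr Ioi_ae_eq_Ici]
  have hsymm := gaussianReal_real_Iic_neg v 0
  rw [neg_zero] at hsymm
  linarith

instance : IsProbabilityMeasure halfNormal :=
  Measure.isProbabilityMeasure_map (by fun_prop)

lemma halfNormal_absolutelyContinuous : halfNormal ≪ volume := by
  refine Measure.AbsolutelyContinuous.mk fun s hs hvol => ?_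
  rw [halfNormal, Measure.map_apply (by fun_prop) hs]
  refine gaussianReal_absolutelyContinuous 0 one_ne_zero ?_
  refine measure_mono_null (t := s ∪ Neg.neg ⁻¹' s) (fun x hx => ?_)
    (measure_union_null hvol (by simpa using hvol))
  rcases abs_choice x with h | h
  · exact .inl (h ▸ hx)
  · exact .inr (by simpa [h] using hx)

lemma halfNormal_real_Ici_of_nonneg {a : ℝ} (ha : 0 ≤ a) :
    halfNormal.real (Set.Ici a) = 2 * (gaussianReal 0 1).real (Set.Ici a) := by
  have := nullSingletonClass_gaussianReal (μ := 0) (one_ne_zero' ℝ≥0)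
  have hpre : (fun y : ℝ => |y|) ⁻¹' Set.Ici a = Set.Iic (-a) ∪ Set.Ici a := by
    ext x
    simp only [Set.mem_preimage, Set.mem_Ici, Set.mem_union, Set.mem_Iic, le_abs']
  have hdisj : AEDisjoint (gaussianReal 0 1) (Set.Iic (-a)) (Set.Ici a) :=
    measure_mono_null (t := {a}) (fun x hx => by
      simp only [Set.mem_inter_iff, Set.mem_Iic, Set.mem_Ici] at hx
      exact Set.mem_singleton_iff.2 (by linarith)) (measure_singleton a)
  rw [halfNormal, map_measureReal_apply (by fun_prop) measurableSet_Ici, hpre,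
    measureReal_union₀ measurableSet_Ici.nullMeasurableSet hdisj, gaussianReal_real_Iic_neg]
  ring

lemma halfNormal_real_Ici_of_nonpos {a : ℝ} (ha : a ≤ 0) : halfNormal.real (Set.Ici a) = 1 := by
  refine le_antisymm measureReal_le_one ?_
  calc (1 : ℝ) = halfNormal.real (Set.Ici 0) := by
        rw [halfNormal_real_Ici_of_nonneg le_rfl, gaussianReal_real_Ici_zero one_ne_zero]; norm_num
    _ ≤ halfNormal.real (Set.Ici a) := measureReal_mono (Set.Ici_subset_Ici.2 ha)

end NormalTail

section RandomWalk

variable {Ω : Type*} {X : ℕ → Ω → ℝ}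

/-- The position `X 0 + ⋯ + X (k - 1)` at time `k` of the random walk with increments `X`. -/
noncomputable def walk (X : ℕ → Ω → ℝ) (k : ℕ) (ω : Ω) : ℝ :=
  ∑ i ∈ Finset.range k, X i ω

@[simp]
lemma walk_zero (ω : Ω) : walk X 0 ω = 0 :=
  Finset.sum_range_zero _

lemma walk_succ (k : ℕ) (ω : Ω) : walk X (k + 1) ω = walk X k ω + X k ω :=
  Finset.sum_range_succ _ _

lemma walk_sub_walk {k n : ℕ} (hkn : k ≤ n) (ω : Ω) :
    walk X n ω - walk X k ω = ∑ i ∈ Finset.Ico k n, X i ω :=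
  (Finset.sum_Ico_eq_sub _ hkn).symm

/-- The `σ`-algebra generated by the variables `X i`, `i ∈ s`. -/
abbrev sigmaOf (X : ℕ → Ω → ℝ) (s : Set ℕ) : MeasurableSpace Ω :=
  ⨆ i ∈ s, MeasurableSpace.comap (X i) inferInstance

lemma measurable_sigmaOf_sum {s : Set ℕ} {t : Finset ℕ} (hts : ↑t ⊆ s) :
    Measurable[sigmaOf X s] fun ω => ∑ i ∈ t, X i ω :=
  @Finset.measurable_fun_sum ℝ ℕ Ω _ _ _ (sigmaOf X s) _ _ fun i hi =>
    (comap_measurable (X i)).mono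
      (le_iSup₂ (f := fun i (_ : i ∈ s) => MeasurableSpace.comap (X i) _) i (hts hi)) le_rfl

lemma measurable_sigmaOf_Iio_walk {j k : ℕ} (hjk : j ≤ k) :
    Measurable[sigmaOf X (Set.Iio k)] (walk X j) :=
  measurable_sigmaOf_sum fun _ hi => (Finset.mem_range.1 hi).trans_le hjk

lemma measurable_sigmaOf_Ici_sum_Ico (k n : ℕ) :
    Measurable[sigmaOf X (Set.Ici k)] fun ω => ∑ i ∈ Finset.Ico k n, X i ω :=
  measurable_sigmaOf_sum fun _ hi => (Finset.mem_Ico.1 hi).1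

variable [mΩ : MeasurableSpace Ω] {P : Measure Ω}

/-- `X` is a sequence of independent, identically distributed real random variables. -/
structure IsIIDSeq (X : ℕ → Ω → ℝ) (P : Measure Ω) : Prop where
  measurable : ∀ i, Measurable (X i)
  iIndepFun : iIndepFun X P
  map_eq : ∀ i, P.map (X i) = P.map (X 0)

namespace IsIIDSeq

lemma sigmaOf_le (h : IsIIDSeq X P) (s : Set ℕ) : sigmaOf X s ≤ mΩ :=
  iSup₂_le fun i _ => (h.measurable i).comap_le

lemma indep_sigmaOf (h : IsIIDSeq X P) {s t : Set ℕ} (hst : Disjoint s t) :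
    Indep (sigmaOf X s) (sigmaOf X t) P :=
  indep_iSup_of_disjoint (fun i => (h.measurable i).comap_le) h.iIndepFun hst

lemma measurable_sum (h : IsIIDSeq X P) (s : Finset ℕ) : Measurable fun ω => ∑ i ∈ s, X i ω :=
  Finset.measurable_fun_sum _ fun i _ => h.measurable i

lemma measurable_walk (h : IsIIDSeq X P) (k : ℕ) : Measurable (walk X k) :=
  h.measurable_sum _

lemma measureReal_preimage_eq (h : IsIIDSeq X P) (i : ℕ) {A : Set ℝ} (hA : MeasurableSet A) :
    P.real (X i ⁻¹' A) = P.real (X 0 ⁻¹' A) := by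
  rw [← map_measureReal_apply (h.measurable i) hA, h.map_eq,
    map_measureReal_apply (h.measurable 0) hA]

lemma map_sum [IsProbabilityMeasure P] (h : IsIIDSeq X P) (s : Finset ℕ) :
    P.map (fun ω => ∑ i ∈ s, X i ω) = convPow (P.map (X 0)) s.card := by
  induction s using Finset.induction_on with
  | empty => simp [convPow]
  | insert a s ha ih =>
    have hindep : IndepFun (fun ω => ∑ i ∈ s, X i ω) (X a) P := by
      simpa only [Finset.sum_fn] using h.iIndepFun.indepFun_finsetSum_of_notMem h.measurable ha
    calc P.map (fun ω => ∑ i ∈ insert a s, X i ω)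
        = P.map ((fun ω => ∑ i ∈ s, X i ω) + X a) := by
          congr 1 with ω
          rw [Finset.sum_insert ha, Pi.add_apply, add_comm]
      _ = convPow (P.map (X 0)) s.card ∗ P.map (X 0) := by
          rw [hindep.map_add_eq_map_conv_map (h.measurable_sum s) (h.measurable a), ih, h.map_eq a]
      _ = convPow (P.map (X 0)) (insert a s).card := by
          rw [Finset.card_insert_of_notMem ha, convPow]

lemma map_walk [IsProbabilityMeasure P] (h : IsIIDSeq X P) (k : ℕ) :
    P.map (walk X k) = convPow (P.map (X 0)) k :=
  (h.map_sum _).trans (by rw [Finset.card_range])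

lemma measureReal_le_walk_sub_walk [IsProbabilityMeasure P] (h : IsIIDSeq X P) {k n : ℕ}
    (hkn : k ≤ n) (x : ℝ) :
    P.real {ω | x ≤ walk X n ω - walk X k ω} = P.real {ω | x ≤ walk X (n - k) ω} := by
  have hlaw : P.map (fun ω => walk X n ω - walk X k ω) = P.map (walk X (n - k)) := by
    simp_rw [walk_sub_walk hkn]
    rw [h.map_sum, Nat.card_Ico, h.map_walk]
  have hreal := congrArg (fun μ => μ.real (Set.Ici x)) hlaw
  rwa [map_measureReal_apply
      ((h.measurable_walk n).fun_sub (h.measurable_walk k)) measurableSet_Ici,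
    map_measureReal_apply (h.measurable_walk _) measurableSet_Ici] at hreal

end IsIIDSeq

end RandomWalk

section FirstPassage

variable {Ω : Type*} {X : ℕ → Ω → ℝ}

/-- The event that the walk with increments `X` reaches the level `b` by time `n`
(time `0` included, so this is interesting only for `0 < b`). -/
def crossing (X : ℕ → Ω → ℝ) (b : ℝ) (n : ℕ) : Set Ω :=
  ⋃ k ∈ Finset.range (n + 1), {ω | b ≤ walk X k ω}

/-- The event that the walk with increments `X` reaches the level `b` at time `k` for the
first time. -/
def firstPassage (X : ℕ → Ω → ℝ) (b : ℝ) : ℕ → Set Ω :=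
  disjointed fun k => {ω | b ≤ walk X k ω}

lemma mem_crossing {b : ℝ} {n : ℕ} {ω : Ω} :
    ω ∈ crossing X b n ↔ ∃ k ≤ n, b ≤ walk X k ω := by
  simp [crossing]

lemma crossing_antitone (n : ℕ) : Antitone fun b => crossing X b n := fun _ _ hbc _ hω =>
  let ⟨k, hkn, hk⟩ := mem_crossing.1 hω
  mem_crossing.2 ⟨k, hkn, hbc.trans hk⟩

lemma firstPassage_eq (b : ℝ) (k : ℕ) :
    firstPassage X b k = {ω | b ≤ walk X k ω} ∩ ⋂ j < k, {ω | walk X j ω < b} := by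
  simp [firstPassage, disjointed_eq_inter_compl, Set.compl_ofPred]

lemma pairwise_disjoint_firstPassage (b : ℝ) :
    Pairwise (Function.onFun Disjoint (firstPassage X b)) :=
  disjoint_disjointed _

lemma biUnion_firstPassage (b : ℝ) (n : ℕ) :
    ⋃ k ∈ Finset.range (n + 1), firstPassage X b k = crossing X b n := by
  rw [crossing, firstPassage, biUnion_range_succ_disjointed, partialSups_eq_biUnion_range]

lemma measurableSet_sigmaOf_Iio_firstPassage (b : ℝ) (k : ℕ) :
    MeasurableSet[sigmaOf X (Set.Iio k)] (firstPassage X b k) := by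
  rw [firstPassage_eq]
  exact (measurable_sigmaOf_Iio_walk le_rfl measurableSet_Ici).inter <|
    .biInter (Set.to_countable _) fun j hj =>
      measurable_sigmaOf_Iio_walk (Set.mem_Iio.1 hj).le measurableSet_Iio

lemma walk_le_add_of_mem_firstPassage {b c : ℝ} (hb : 0 < b) {k : ℕ} {ω : Ω}
    (hfirst : ω ∈ firstPassage X b k) (hjump : ∀ i < k, X i ω ≤ c) : walk X k ω ≤ b + c := by
  rw [firstPassage_eq] at hfirst
  obtain ⟨hlevel, hbefore⟩ := hfirst
  cases k with
  | zero => simp [hb.not_ge] at hlevel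
  | succ m =>
    have hm : walk X m ω < b := Set.mem_iInter₂.1 hbefore m m.lt_succ_self
    rw [walk_succ]
    exact add_le_add hm.le (hjump m m.lt_succ_self)

end FirstPassage

section MaximalInequalities

variable {Ω : Type*} [MeasurableSpace Ω] {P : Measure Ω} {X : ℕ → Ω → ℝ}

namespace IsIIDSeq

lemma measurableSet_firstPassage (h : IsIIDSeq X P) (b : ℝ) (k : ℕ) :
    MeasurableSet (firstPassage X b k) :=
  h.sigmaOf_le _ _ (measurableSet_sigmaOf_Iio_firstPassage b k)

lemma measurableSet_crossing (h : IsIIDSeq X P) (b : ℝ) (n : ℕ) :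
    MeasurableSet (crossing X b n) :=
  Finset.measurableSet_biUnion _ fun k _ => measurableSet_le measurable_const (h.measurable_walk k)

variable [IsProbabilityMeasure P]

lemma measureReal_firstPassage_inter (h : IsIIDSeq X P) (b x : ℝ) {k n : ℕ} (hkn : k ≤ n) :
    P.real (firstPassage X b k ∩ {ω | x ≤ walk X n ω - walk X k ω}) =
      P.real {ω | x ≤ walk X (n - k) ω} * P.real (firstPassage X b k) := by
  have hfuture : MeasurableSet[sigmaOf X (Set.Ici k)] {ω | x ≤ walk X n ω - walk X k ω} := by
    simp_rw [walk_sub_walk hkn]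
    exact measurable_sigmaOf_Ici_sum_Ico k n measurableSet_Ici
  have hindep : Indep (sigmaOf X (Set.Iio k)) (sigmaOf X (Set.Ici k)) P :=
    h.indep_sigmaOf (Set.Iio_disjoint_Ici le_rfl)
  rw [← h.measureReal_le_walk_sub_walk hkn, measureReal_def,
    (Indep_iff _ _ _).1 hindep _ _ (measurableSet_sigmaOf_Iio_firstPassage b k) hfuture,
    ENNReal.toReal_mul, mul_comm, measureReal_def, measureReal_def]

lemma measureReal_crossing (h : IsIIDSeq X P) (b : ℝ) (n : ℕ) :
    P.real (crossing X b n) = ∑ k ∈ Finset.range (n + 1), P.real (firstPassage X b k) := by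
  rw [← biUnion_firstPassage, measureReal_biUnion_finset
    ((pairwise_disjoint_firstPassage b).set_pairwise _) fun k _ => h.measurableSet_firstPassage b k]

lemma measureReal_biUnion_firstPassage_inter (h : IsIIDSeq X P) (b x : ℝ) (n : ℕ) :
    P.real (⋃ k ∈ Finset.range (n + 1),
        firstPassage X b k ∩ {ω | x ≤ walk X n ω - walk X k ω}) =
      ∑ k ∈ Finset.range (n + 1),
        P.real {ω | x ≤ walk X (n - k) ω} * P.real (firstPassage X b k) := by
  rw [measureReal_biUnion_finset]
  · exact Finset.sum_congr rfl fun k hk =>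
      h.measureReal_firstPassage_inter b x (Finset.mem_range_succ_iff.1 hk)
  · exact Set.PairwiseDisjoint.mono ((pairwise_disjoint_firstPassage b).set_pairwise _)
      fun k => Set.inter_subset_left
  · exact fun k _ => (h.measurableSet_firstPassage b k).inter <|
      measurableSet_le measurable_const ((h.measurable_walk n).sub (h.measurable_walk k))

lemma mul_measureReal_crossing_le (h : IsIIDSeq X P) (b : ℝ) {c q : ℝ} (n : ℕ)
    (hq : ∀ j, q ≤ P.real {ω | -c ≤ walk X j ω}) :
    q * P.real (crossing X b n) ≤ P.real {ω | b - c ≤ walk X n ω} := by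
  calc q * P.real (crossing X b n)
      ≤ ∑ k ∈ Finset.range (n + 1),
          P.real {ω | -c ≤ walk X (n - k) ω} * P.real (firstPassage X b k) := by
        rw [h.measureReal_crossing, Finset.mul_sum]
        gcongr with k
        exact hq _
    _ ≤ P.real {ω | b - c ≤ walk X n ω} := by
        rw [← h.measureReal_biUnion_firstPassage_inter]
        refine measureReal_mono <| Set.iUnion₂_subset fun k _ ω ⟨hfirst, hinc⟩ => ?_
        have hlevel : b ≤ walk X k ω := (firstPassage_eq b k ▸ hfirst).1
        simp only [Set.mem_ofPred_eq] at hinc ⊢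
        linarith

lemma measureReal_le_walk_le_add_mul_crossing (h : IsIIDSeq X P) {b c q : ℝ} (hb : 0 < b)
    (hc : 0 ≤ c) (n : ℕ) (hq : ∀ j, P.real {ω | c ≤ walk X j ω} ≤ q) :
    P.real {ω | b + 2 * c ≤ walk X n ω} ≤
      P.real {ω | ∃ i < n, c < X i ω} + q * P.real (crossing X b n) := by
  have hcover : {ω | b + 2 * c ≤ walk X n ω} ⊆ {ω | ∃ i < n, c < X i ω} ∪
      ⋃ k ∈ Finset.range (n + 1), firstPassage X b k ∩ {ω | c ≤ walk X n ω - walk X k ω} := by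
    intro ω hω
    by_cases hjump : ∃ i < n, c < X i ω
    · exact .inl hjump
    push Not at hjump
    rw [Set.mem_ofPred_eq] at hω
    have hcross : ω ∈ crossing X b n := mem_crossing.2 ⟨n, le_rfl, by linarith⟩
    rw [← biUnion_firstPassage] at hcross
    obtain ⟨k, hk, hfirst⟩ := Set.mem_iUnion₂.1 hcross
    have hovershoot : walk X k ω ≤ b + c := walk_le_add_of_mem_firstPassage hb hfirst
      fun i hi => hjump i (hi.trans_le (Finset.mem_range_succ_iff.1 hk))
    exact .inr (Set.mem_biUnion hk ⟨hfirst, show c ≤ walk X n ω - walk X k ω by linarith⟩)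
  refine (measureReal_mono hcover).trans <| (measureReal_union_le _ _).trans ?_
  rw [h.measureReal_biUnion_firstPassage_inter, h.measureReal_crossing, Finset.mul_sum]
  gcongr with k
  exact hq _

end IsIIDSeq

end MaximalInequalities

section ErdosKac

lemma tendsto_sqrt_natCast_atTop : Tendsto (fun n : ℕ => √(n : ℝ)) atTop atTop :=
  Real.tendsto_sqrt_atTop.comp tendsto_natCast_atTop_atTop

variable {Ω : Type*} [MeasurableSpace Ω] {P : Measure Ω} {X : ℕ → Ω → ℝ}

lemma tendsto_sq_mul_measureReal_lt [IsFiniteMeasure P] {f : Ω → ℝ} (hf : Measurable f)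
    (hint : Integrable (fun ω => f ω ^ 2) P) :
    Tendsto (fun r : ℝ => r ^ 2 * P.real {ω | r < f ω}) atTop (𝓝 0) := by
  have hmeas (r : ℝ) : MeasurableSet {ω | r < f ω} := measurableSet_lt measurable_const hf
  have hvanish : Tendsto (fun r : ℝ => P {ω | r < f ω}) atTop (𝓝 0) := by
    rw [← measure_empty (μ := P)]
    refine tendsto_measure_of_tendsto_indicator_of_isFiniteMeasure atTop P hmeas fun ω => ?_
    filter_upwards [eventually_ge_atTop (f ω)] with r hr
    simp [hr]
  refine tendsto_of_tendsto_of_tendsto_of_le_of_le' tendsto_const_nhds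
    (hint.tendsto_setIntegral_nhds_zero hvanish)
    (Eventually.of_forall fun r => by positivity) ?_
  filter_upwards [eventually_ge_atTop 0] with r hr
  exact setIntegral_ge_of_const_le_real (hmeas r) (measure_ne_top P _)
    (fun ω hω => pow_le_pow_left₀ hr (le_of_lt hω) 2) hint.integrableOn

/-- `X` is a sequence of i.i.d. random variables with mean `0` and variance `1`. -/
structure IsStandardIIDSeq (X : ℕ → Ω → ℝ) (P : Measure Ω) : Prop extends IsIIDSeq X P where
  integral_eq_zero : ∫ ω, X 0 ω ∂P = 0
  integral_sq_eq_one : ∫ ω, X 0 ω ^ 2 ∂P = 1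

namespace IsStandardIIDSeq

lemma integrable_sq (h : IsStandardIIDSeq X P) : Integrable (fun ω => X 0 ω ^ 2) P :=
  integrable_of_integral_eq_one h.integral_sq_eq_one

variable [IsProbabilityMeasure P]

lemma tendsto_measureReal_le_walk (h : IsStandardIIDSeq X P) (a : ℝ) :
    Tendsto (fun n : ℕ => P.real {ω | a * √n ≤ walk X n ω}) atTop
      (𝓝 ((gaussianReal 0 1).real (Set.Ici a))) := by
  have hgauss : HasLaw (id : ℝ → ℝ) (gaussianReal 0 1) (gaussianReal 0 1) :=
    ⟨aemeasurable_id, Measure.map_id⟩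
  have hident (i : ℕ) : IdentDistrib (X i) (X 0) P P :=
    ⟨(h.measurable i).aemeasurable, (h.measurable 0).aemeasurable, h.map_eq i⟩
  have hclt := (tendstoInDistribution_inv_sqrt_mul_sum hgauss h.integral_eq_zero
    h.integral_sq_eq_one h.iIndepFun hident).tendsto
  have := nullSingletonClass_gaussianReal (μ := 0) (one_ne_zero' ℝ≥0)
  have htail := ProbabilityMeasure.tendsto_measure_of_null_frontier_of_tendsto' hclt
    (E := Set.Ici a) (by simp)
  simp only [ProbabilityMeasure.coe_mk, Measure.map_id] at htail
  refine ((ENNReal.tendsto_toReal (measure_ne_top _ _)).comp htail).congr' ?_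
  filter_upwards [eventually_gt_atTop 0] with n hn
  have hsqrt : 0 < √(n : ℝ) := Real.sqrt_pos.2 (Nat.cast_pos.2 hn)
  rw [Function.comp_apply,
    Measure.map_apply ((h.measurable_sum _).const_mul _) measurableSet_Ici, ← measureReal_def]
  congr 1 with ω
  rw [Set.mem_preimage, Set.mem_Ici, le_inv_mul_iff₀' hsqrt, Set.mem_ofPred_eq, walk]

lemma eventually_forall_measureReal_le_walk (h : IsStandardIIDSeq X P) {ε : ℝ} (hε : 0 < ε) :
    ∀ᶠ r : ℝ in atTop, ∀ j, P.real {ω | r ≤ walk X j ω} ≤ 1 / 2 + ε ∧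
      1 / 2 - ε ≤ P.real {ω | -r ≤ walk X j ω} := by
  have hclt := h.tendsto_measureReal_le_walk 0
  rw [gaussianReal_real_Ici_zero one_ne_zero] at hclt
  obtain ⟨K, hK⟩ := eventually_atTop.1 <|
    hclt.eventually (Icc_mem_nhds (sub_lt_self (1 / 2) hε) (lt_add_of_pos_right (1 / 2) hε))
  have hsmall : ∀ j ∈ Finset.range K, ∀ᶠ r : ℝ in atTop,
      P.real {ω | r ≤ walk X j ω} ≤ 1 / 2 + ε ∧
        1 / 2 - ε ≤ P.real {ω | -r ≤ walk X j ω} := by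
    intro j _
    have := Measure.isProbabilityMeasure_map (μ := P) (h.measurable_walk j).aemeasurable
    have hreal (x : ℝ) : (P.map (walk X j)).real (Set.Ici x) = P.real {ω | x ≤ walk X j ω} :=
      map_measureReal_apply (h.measurable_walk j) measurableSet_Ici
    have hright := tendsto_measureReal_Ici_atTop (P.map (walk X j))
    have hleft := (tendsto_measureReal_Ici_atBot (P.map (walk X j))).comp tendsto_neg_atTop_atBot
    simp only [Function.comp_def, hreal] at hright hleft
    exact (hright.eventually_le_const (by positivity)).and
      (hleft.eventually_const_le (by linarith))
  filter_upwards [(Finset.eventually_all _).2 hsmall, eventually_ge_atTop 0] with r hr hr0 j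
  rcases lt_or_ge j K with hj | hj
  · exact hr j (Finset.mem_range.2 hj)
  · obtain ⟨hlower, hupper⟩ := hK j hj
    rw [zero_mul] at hlower hupper
    exact ⟨(measureReal_mono fun ω hω => hr0.trans hω).trans hupper,
      hlower.trans (measureReal_mono fun ω hω => (neg_nonpos.2 hr0).trans hω)⟩

lemma tendsto_measureReal_exists_lt (h : IsStandardIIDSeq X P) {c : ℝ} (hc : 0 < c) :
    Tendsto (fun n : ℕ => P.real {ω | ∃ i < n, c * √n < X i ω}) atTop (𝓝 0) := by
  have hlim : Tendsto (fun n : ℕ => (c ^ 2)⁻¹ * ((c * √n) ^ 2 * P.real {ω | c * √n < X 0 ω}))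
      atTop (𝓝 0) := by
    simpa only [mul_zero, Function.comp_def] using ((tendsto_sq_mul_measureReal_lt (h.measurable 0)
      h.integrable_sq).comp (tendsto_sqrt_natCast_atTop.const_mul_atTop hc)).const_mul (c ^ 2)⁻¹
  refine squeeze_zero (fun _ => measureReal_nonneg) (fun n => ?_) hlim
  have hunion : {ω | ∃ i < n, c * √n < X i ω} =
      ⋃ i ∈ Finset.range n, X i ⁻¹' Set.Ioi (c * √n) := by
    ext ω
    simp
  calc P.real {ω | ∃ i < n, c * √n < X i ω}
      ≤ ∑ i ∈ Finset.range n, P.real (X i ⁻¹' Set.Ioi (c * √n)) :=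
        hunion ▸ measureReal_biUnion_finset_le _ _
    _ = n * P.real {ω | c * √n < X 0 ω} := by
        simp_rw [h.measureReal_preimage_eq _ measurableSet_Ioi]
        rw [Finset.sum_const, Finset.card_range, nsmul_eq_mul]
        rfl
    _ = (c ^ 2)⁻¹ * ((c * √n) ^ 2 * P.real {ω | c * √n < X 0 ω}) := by
        rw [mul_pow, Real.sq_sqrt n.cast_nonneg]
        field_simp

lemma eventually_measureReal_crossing_lt (h : IsStandardIIDSeq X P) {a b : ℝ}
    (hb : 2 * (gaussianReal 0 1).real (Set.Ici a) < b) :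
    ∀ᶠ n : ℕ in atTop, P.real (crossing X (a * √n) n) < b := by
  have := nullSingletonClass_gaussianReal (μ := 0) (one_ne_zero' ℝ≥0)
  set G : ℝ → ℝ := fun x => (gaussianReal 0 1).real (Set.Ici x)
  have hG : Continuous G := continuous_measureReal_Ici _
  have hcont : Tendsto (fun ε => 2 * (G (a - ε) + ε) + 2 * ε) (𝓝[>] 0) (𝓝 (2 * G a)) :=
    (Continuous.tendsto' (by fun_prop) 0 _ (by simp)).mono_left nhdsWithin_le_nhds
  obtain ⟨ε, hεb, hε⟩ := ((hcont.eventually_lt_const hb).and self_mem_nhdsWithin).exists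
  filter_upwards [(h.tendsto_measureReal_le_walk (a - ε)).eventually_le_const
      (lt_add_of_pos_right _ hε),
    (tendsto_sqrt_natCast_atTop.const_mul_atTop hε).eventually
      (h.eventually_forall_measureReal_le_walk hε)] with n hclt hmedian
  have hrefl := h.mul_measureReal_crossing_le (a * √n) n fun j => (hmedian j).2
  rw [← sub_mul] at hrefl
  have hprob : P.real (crossing X (a * √n) n) ≤ 1 := measureReal_le_one
  have hmul := mul_le_mul_of_nonneg_left hprob hε.le
  linarith

lemma eventually_lt_measureReal_crossing (h : IsStandardIIDSeq X P) {a b : ℝ} (ha : 0 < a)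
    (hb : b < 2 * (gaussianReal 0 1).real (Set.Ici a)) :
    ∀ᶠ n : ℕ in atTop, b < P.real (crossing X (a * √n) n) := by
  have := nullSingletonClass_gaussianReal (μ := 0) (one_ne_zero' ℝ≥0)
  set G : ℝ → ℝ := fun x => (gaussianReal 0 1).real (Set.Ici x)
  have hG : Continuous G := continuous_measureReal_Ici _
  have hcont : Tendsto (fun ε => 2 * (G (a + 2 * ε) - 2 * ε) - 2 * ε) (𝓝[>] 0) (𝓝 (2 * G a)) :=
    (Continuous.tendsto' (by fun_prop) 0 _ (by simp)).mono_left nhdsWithin_le_nhds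
  obtain ⟨ε, hεb, hε⟩ := ((hcont.eventually_const_lt hb).and self_mem_nhdsWithin).exists
  filter_upwards [(h.tendsto_measureReal_le_walk (a + 2 * ε)).eventually_const_le
      (sub_lt_self _ hε), (h.tendsto_measureReal_exists_lt hε).eventually_le_const hε,
    (tendsto_sqrt_natCast_atTop.const_mul_atTop hε).eventually
      (h.eventually_forall_measureReal_le_walk hε), eventually_gt_atTop 0]
    with n hclt hjump hmedian hn
  have hsqrt : 0 < √(n : ℝ) := Real.sqrt_pos.2 (Nat.cast_pos.2 hn)
  have hrefl := h.measureReal_le_walk_le_add_mul_crossing (mul_pos ha hsqrt)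
    (mul_pos hε hsqrt).le n fun j => (hmedian j).1
  rw [← mul_assoc, ← add_mul] at hrefl
  have hprob : P.real (crossing X (a * √n) n) ≤ 1 := measureReal_le_one
  have hmul := mul_le_mul_of_nonneg_left hprob hε.le
  linarith

theorem tendsto_measureReal_crossing (h : IsStandardIIDSeq X P) {a : ℝ} (ha : 0 < a) :
    Tendsto (fun n : ℕ => P.real (crossing X (a * √n) n)) atTop
      (𝓝 (2 * (gaussianReal 0 1).real (Set.Ici a))) :=
  tendsto_order.2 ⟨fun _ hb => h.eventually_lt_measureReal_crossing ha hb,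
    fun _ hb => h.eventually_measureReal_crossing_lt hb⟩

end IsStandardIIDSeq

end ErdosKac

section WindowMaximum

variable {Ω : Type*} {X : ℕ → Ω → ℝ}

/-- The maximum of the random walk with increments `X` over the times `k, …, n`. For `n < k`,
when there are no such times, it is the position at time `k`. -/
noncomputable def windowMax (X : ℕ → Ω → ℝ) (k n : ℕ) (ω : Ω) : ℝ :=
  (Finset.Icc k (max n k)).sup' (Finset.nonempty_Icc.2 (le_max_right n k)) fun j => walk X j ω

lemma le_windowMax_iff {k n : ℕ} (hkn : k ≤ n) {b : ℝ} {ω : Ω} :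
    b ≤ windowMax X k n ω ↔ ∃ j ∈ Finset.Icc k n, b ≤ walk X j ω := by
  rw [windowMax, Finset.le_sup'_iff, max_eq_left hkn]

lemma le_windowMax_one_iff_mem_crossing {n : ℕ} (hn : 1 ≤ n) {b : ℝ} (hb : 0 < b) {ω : Ω} :
    b ≤ windowMax X 1 n ω ↔ ω ∈ crossing X b n := by
  rw [le_windowMax_iff hn, mem_crossing]
  constructor
  · rintro ⟨j, hj, hlevel⟩
    exact ⟨j, (Finset.mem_Icc.1 hj).2, hlevel⟩
  · rintro ⟨j, hjn, hlevel⟩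
    have hj : j ≠ 0 := by
      rintro rfl
      exact hb.not_ge (hlevel.trans_eq (walk_zero ω))
    exact ⟨j, Finset.mem_Icc.2 ⟨Nat.one_le_iff_ne_zero.2 hj, hjn⟩, hlevel⟩

lemma windowMax_one_eq_windowMax {k n : ℕ} (hk : 1 ≤ k) (hkn : k ≤ n) {b : ℝ} {ω : Ω}
    (hearly : ω ∉ crossing X b k) (hlate : ω ∈ crossing X b n) :
    windowMax X 1 n ω = windowMax X k n ω := by
  have hbefore (j : ℕ) (hjk : j ≤ k) : walk X j ω < b :=
    not_le.1 fun hj => hearly (mem_crossing.2 ⟨j, hjk, hj⟩)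
  obtain ⟨i, hin, hi⟩ := mem_crossing.1 hlate
  have hki : k ≤ i := le_of_not_gt fun hik => (hbefore i hik.le).not_ge hi
  apply eq_of_forall_le_iff
  intro c
  rw [le_windowMax_iff (hk.trans hkn), le_windowMax_iff hkn]
  constructor
  · rintro ⟨j, hj, hcj⟩
    rcases le_total k j with hkj | hjk
    · exact ⟨j, Finset.mem_Icc.2 ⟨hkj, (Finset.mem_Icc.1 hj).2⟩, hcj⟩
    · exact ⟨i, Finset.mem_Icc.2 ⟨hki, hin⟩, hcj.trans ((hbefore j hjk).le.trans hi)⟩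
  · rintro ⟨j, hj, hcj⟩
    exact ⟨j, Finset.Icc_subset_Icc_left hk hj, hcj⟩

lemma exists_windowMax_eq_walk_add (X : ℕ → Ω → ℝ) (k n : ℕ) :
    ∃ R : Ω → ℝ, Measurable[sigmaOf X (Set.Ici k)] R ∧ windowMax X k n = walk X k + R := by
  refine ⟨(Finset.Icc k (max n k)).sup' (Finset.nonempty_Icc.2 (le_max_right n k))
    fun j ω => ∑ i ∈ Finset.Ico k j, X i ω, ?_, ?_⟩
  · exact @Finset.measurable_sup' ℝ _ Ω (sigmaOf X (Set.Ici k)) _ _ ℕ _ _ _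
      fun j _ => measurable_sigmaOf_Ici_sum_Ico k j
  · ext ω
    rw [Pi.add_apply, Finset.sup'_apply, Finset.add_sup']
    refine Finset.sup'_congr _ rfl fun j hj => ?_
    rw [← walk_sub_walk (Finset.mem_Icc.1 hj).1, add_sub_cancel]

variable [MeasurableSpace Ω] {P : Measure Ω}

namespace IsIIDSeq

lemma measurable_windowMax (h : IsIIDSeq X P) (k n : ℕ) : Measurable (windowMax X k n) := by
  obtain ⟨R, hR, heq⟩ := exists_windowMax_eq_walk_add X k n
  rw [heq]
  exact (h.measurable_walk k).add (hR.mono (h.sigmaOf_le _) le_rfl)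

variable [IsProbabilityMeasure P]

lemma shiftTV_map_windowMax_le (h : IsIIDSeq X P) (k n : ℕ) (t : ℝ) :
    shiftTV (P.map (windowMax X k n)) t ≤ shiftTV (convPow (P.map (X 0)) k) t := by
  obtain ⟨R, hR, heq⟩ := exists_windowMax_eq_walk_add X k n
  have hindep : IndepFun (walk X k) R P :=
    (IndepFun_iff_Indep _ _ _).2 <|
      indep_of_indep_of_le_left
        (indep_of_indep_of_le_right (h.indep_sigmaOf (Set.Iio_disjoint_Ici le_rfl)) hR.comap_le)
        (measurable_sigmaOf_Iio_walk le_rfl).comap_le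
  have hRmeas : Measurable R := hR.mono (h.sigmaOf_le _) le_rfl
  have := Measure.isProbabilityMeasure_map (μ := P) hRmeas.aemeasurable
  have := Measure.isProbabilityMeasure_map (μ := P) (h.measurable 0).aemeasurable
  rw [heq, hindep.map_add_eq_map_conv_map (h.measurable_walk k) hRmeas, h.map_walk]
  exact shiftTV_conv_le t

lemma dTV_map_windowMax_le (h : IsIIDSeq X P) {k n : ℕ} (hk : 1 ≤ k) (hkn : k ≤ n) (b : ℝ) :
    dTV (P.map (windowMax X k n)) (P.map (windowMax X 1 n)) ≤
      P.real (crossing X b k) + (1 - P.real (crossing X b n)) := by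
  refine (dTV_map_map_le_measureReal_ne (h.measurable_windowMax k n)
    (h.measurable_windowMax 1 n)).trans ?_
  rw [← probReal_compl_eq_one_sub (h.measurableSet_crossing b n)]
  refine (measureReal_mono fun ω hne => ?_).trans (measureReal_union_le _ _)
  by_contra! hω
  rw [Set.mem_union, not_or, Set.notMem_compl_iff] at hω
  exact hne (windowMax_one_eq_windowMax hk hkn hω.1 hω.2).symm

lemma shiftTV_map_windowMax_one_le (h : IsIIDSeq X P) {k n : ℕ} (hk : 1 ≤ k) (hkn : k ≤ n)
    (b t : ℝ) :
    shiftTV (P.map (windowMax X 1 n)) t ≤ shiftTV (convPow (P.map (X 0)) k) t +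
      2 * (P.real (crossing X b k) + (1 - P.real (crossing X b n))) := by
  have := Measure.isProbabilityMeasure_map (μ := P) (h.measurable_windowMax 1 n).aemeasurable
  have := Measure.isProbabilityMeasure_map (μ := P) (h.measurable_windowMax k n).aemeasurable
  have hcompare := shiftTV_le_add_two_mul_dTV (μ := P.map (windowMax X 1 n))
    (ν := P.map (windowMax X k n)) t
  have hwindow := h.shiftTV_map_windowMax_le k n t
  have hdTV := h.dTV_map_windowMax_le hk hkn b
  rw [dTV_comm] at hdTV
  linarith

end IsIIDSeq

end WindowMaximum

section Smoothness

lemma sqrt_mul_sqrt_div_le (m n : ℕ) : √(m : ℝ) * √((n / m : ℕ) : ℝ) ≤ √(n : ℝ) := by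
  rw [← Real.sqrt_mul m.cast_nonneg, ← Nat.cast_mul]
  exact Real.sqrt_le_sqrt (Nat.cast_le.2 (Nat.mul_div_le n m))

lemma sqrt_le_sqrt_two_mul_mul_sqrt_div {m n : ℕ} (hm : 1 ≤ m) (hmn : m ≤ n) :
    √(n : ℝ) ≤ √(2 * m : ℝ) * √((n / m : ℕ) : ℝ) := by
  have hdiv : 1 ≤ n / m := (Nat.one_le_div_iff hm).2 hmn
  have hlt : n < m * (n / m + 1) := Nat.lt_mul_div_succ n hm
  have hle : n ≤ 2 * m * (n / m) := by nlinarith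
  rw [← Real.sqrt_mul (by positivity)]
  exact Real.sqrt_le_sqrt (by exact_mod_cast hle)

lemma exists_eventually_shiftTV_convPow_div_le {μ : Measure ℝ} [IsProbabilityMeasure μ]
    (hμ : ∃ r, ¬ convPow μ r ⟂ₘ volume) {m : ℕ} (hm : 1 ≤ m) {ε : ℝ} (hε : 0 < ε) :
    ∃ δ > 0, ∀ᶠ n : ℕ in atTop, ∀ t ∈ Set.Ioc 0 δ,
      shiftTV (convPow μ (n / m)) (√n * t) ≤ ε := by
  obtain ⟨C, hC⟩ := exists_sqrt_mul_shiftTV_convPow_le hμ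
  have hC0 : 0 ≤ C := by simpa [shiftTV_zero] using hC 1 0
  have hδ : Tendsto (fun δ : ℝ => C * (√(2 * m) * δ)) (𝓝[>] 0) (𝓝 0) :=
    (Continuous.tendsto' (by fun_prop) 0 _ (by simp)).mono_left nhdsWithin_le_nhds
  obtain ⟨δ, hδε, hδ0⟩ := ((hδ.eventually_le_const (half_pos hε)).and self_mem_nhdsWithin).exists
  have hsqrt : Tendsto (fun n : ℕ => ε / 2 * √((n / m : ℕ) : ℝ)) atTop atTop :=
    (tendsto_sqrt_natCast_atTop.comp (Nat.tendsto_div_const_atTop (by omega))).const_mul_atTop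
      (half_pos hε)
  refine ⟨δ, hδ0, ?_⟩
  filter_upwards [hsqrt.eventually_ge_atTop C, eventually_ge_atTop m] with n hn hmn t ht
  have hk : 0 < √((n / m : ℕ) : ℝ) :=
    Real.sqrt_pos.2 (Nat.cast_pos.2 ((Nat.one_le_div_iff hm).2 hmn))
  refine le_of_mul_le_mul_left ?_ hk
  calc √((n / m : ℕ) : ℝ) * shiftTV (convPow μ (n / m)) (√n * t)
      ≤ C * (|√n * t| + 1) := hC _ _
    _ = C * (√n * t) + C := by
        rw [abs_of_nonneg (mul_nonneg (Real.sqrt_nonneg _) ht.1.le), mul_add, mul_one]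
    _ ≤ C * (√(2 * m) * √((n / m : ℕ) : ℝ) * δ) + ε / 2 * √((n / m : ℕ) : ℝ) := by
        gcongr
        · exact ht.1.le
        · exact sqrt_le_sqrt_two_mul_mul_sqrt_div hm hmn
        · exact ht.2
    _ = √((n / m : ℕ) : ℝ) * (C * (√(2 * m) * δ) + ε / 2) := by ring
    _ ≤ √((n / m : ℕ) : ℝ) * ε := by
        gcongr
        linarith

lemma tendsto_two_mul_gaussianReal_real_Ici_nhdsGT_zero :
    Tendsto (fun b => 2 * (gaussianReal 0 1).real (Set.Ici b)) (𝓝[>] 0) (𝓝 1) := by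
  have := nullSingletonClass_gaussianReal (μ := 0) (one_ne_zero' ℝ≥0)
  refine (((continuous_measureReal_Ici _).const_mul 2).tendsto' 0 1 ?_).mono_left
    nhdsWithin_le_nhds
  rw [gaussianReal_real_Ici_zero one_ne_zero]
  norm_num

namespace IsStandardIIDSeq

variable {Ω : Type*} [MeasurableSpace Ω] {P : Measure Ω} [IsProbabilityMeasure P]
  {X : ℕ → Ω → ℝ}

lemma exists_eventually_lt_measureReal_crossing (h : IsStandardIIDSeq X P) {r : ℝ} (hr : r < 1) :
    ∃ b > 0, ∀ᶠ n : ℕ in atTop, r < P.real (crossing X (b * √n) n) := by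
  obtain ⟨b, hrb, hb⟩ := ((tendsto_two_mul_gaussianReal_real_Ici_nhdsGT_zero.eventually_const_lt
    hr).and self_mem_nhdsWithin).exists
  exact ⟨b, hb, h.eventually_lt_measureReal_crossing hb hrb⟩

lemma exists_eventually_measureReal_crossing_div_lt (h : IsStandardIIDSeq X P) {b ε : ℝ}
    (hb : 0 < b) (hε : 0 < ε) :
    ∃ m ≥ 1, ∀ᶠ n : ℕ in atTop, P.real (crossing X (b * √n) (n / m)) < ε := by
  have hlevel : Tendsto (fun c => 2 * (gaussianReal 0 1).real (Set.Ici c)) atTop (𝓝 0) := by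
    simpa only [mul_zero] using (tendsto_measureReal_Ici_atTop (gaussianReal 0 1)).const_mul 2
  obtain ⟨c, hcε⟩ := (hlevel.eventually_lt_const hε).exists
  obtain ⟨m, hm, hcm⟩ := ((eventually_ge_atTop 1).and
    ((tendsto_sqrt_natCast_atTop.const_mul_atTop hb).eventually_ge_atTop c)).exists
  refine ⟨m, hm, ?_⟩
  filter_upwards [(Nat.tendsto_div_const_atTop (Nat.one_le_iff_ne_zero.1 hm)).eventually
    (h.eventually_measureReal_crossing_lt hcε)] with n hn
  have hthreshold : c * √((n / m : ℕ) : ℝ) ≤ b * √n := calc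
    c * √((n / m : ℕ) : ℝ) ≤ b * √m * √((n / m : ℕ) : ℝ) := by gcongr
    _ ≤ b * √n := by
        rw [mul_assoc]
        gcongr
        exact sqrt_mul_sqrt_div_le m n
  exact (measureReal_mono (crossing_antitone _ hthreshold)).trans_lt hn

lemma exists_eventually_shiftTV_windowMax_le (h : IsStandardIIDSeq X P)
    (hX : ∃ r, ¬ convPow (P.map (X 0)) r ⟂ₘ volume) {ε : ℝ} (hε : 0 < ε) :
    ∃ δ > 0, ∀ᶠ n : ℕ in atTop, ∀ t ∈ Set.Ioc 0 δ,
      shiftTV (P.map fun ω => windowMax X 1 n ω / √n) t ≤ ε := by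
  have := Measure.isProbabilityMeasure_map (μ := P) (h.measurable 0).aemeasurable
  obtain ⟨b, hb, hlate⟩ :=
    h.exists_eventually_lt_measureReal_crossing (sub_lt_self 1 (by positivity : 0 < ε / 8))
  obtain ⟨m, hm, hearly⟩ :=
    h.exists_eventually_measureReal_crossing_div_lt hb (by positivity : 0 < ε / 8)
  obtain ⟨δ, hδ, hpow⟩ := exists_eventually_shiftTV_convPow_div_le hX hm (half_pos hε)
  refine ⟨δ, hδ, ?_⟩
  filter_upwards [hlate, hearly, hpow, eventually_ge_atTop m] with n hlate hearly hpow hmn t ht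
  have hsqrt : √(n : ℝ) ≠ 0 := (Real.sqrt_pos.2 (Nat.cast_pos.2 (hm.trans hmn))).ne'
  have := Measure.isProbabilityMeasure_map (μ := P) (h.measurable_windowMax 1 n).aemeasurable
  have hscale : shiftTV (P.map fun ω => windowMax X 1 n ω / √n) t ≤
      shiftTV (P.map (windowMax X 1 n)) (√n * t) := by
    have hle := shiftTV_map_div_le (μ := P.map (windowMax X 1 n)) hsqrt t
    rwa [Measure.map_map (by fun_prop) (h.measurable_windowMax 1 n)] at hle
  have hwindow := h.shiftTV_map_windowMax_one_le ((Nat.one_le_div_iff hm).2 hmn)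
    (Nat.div_le_self n m) (b * √n) (√n * t)
  linarith [hpow t ht]

end IsStandardIIDSeq

end Smoothness

section TotalVariationConvergence

lemma not_mutuallySingular_of_absolutelyContinuous {α : Type*} [MeasurableSpace α]
    {μ ν : Measure α} [NeZero μ] (h : μ ≪ ν) : ¬ μ ⟂ₘ ν := fun hsing =>
  NeZero.ne μ (Measure.eq_zero_of_absolutelyContinuous_of_mutuallySingular h hsing)

variable {Ω : Type*} [MeasurableSpace Ω] {P : Measure Ω} {X : ℕ → Ω → ℝ}

lemma IsIIDSeq.measureReal_map_windowMax_div_Ici (h : IsIIDSeq X P) {n : ℕ} (hn : 1 ≤ n) {a : ℝ}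
    (ha : 0 < a) :
    (P.map fun ω => windowMax X 1 n ω / √n).real (Set.Ici a) =
      P.real (crossing X (a * √n) n) := by
  have hsqrt : 0 < √(n : ℝ) := Real.sqrt_pos.2 (Nat.cast_pos.2 hn)
  rw [map_measureReal_apply ((h.measurable_windowMax 1 n).div_const _) measurableSet_Ici]
  congr 1 with ω
  rw [Set.mem_preimage, Set.mem_Ici, le_div_iff₀ hsqrt,
    le_windowMax_one_iff_mem_crossing hn (mul_pos ha hsqrt)]

namespace IsStandardIIDSeq

variable [IsProbabilityMeasure P]

theorem tendsto_measureReal_map_windowMax_div_Ici (h : IsStandardIIDSeq X P) (a : ℝ) :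
    Tendsto (fun n : ℕ => (P.map fun ω => windowMax X 1 n ω / √n).real (Set.Ici a)) atTop
      (𝓝 (halfNormal.real (Set.Ici a))) := by
  have (n : ℕ) : IsProbabilityMeasure (P.map fun ω => windowMax X 1 n ω / √n) :=
    Measure.isProbabilityMeasure_map ((h.measurable_windowMax 1 n).div_const _).aemeasurable
  rcases lt_or_ge 0 a with ha | ha
  · rw [halfNormal_real_Ici_of_nonneg ha.le]
    refine (h.tendsto_measureReal_crossing ha).congr' ?_
    filter_upwards [eventually_ge_atTop 1] with n hn
    exact (h.measureReal_map_windowMax_div_Ici hn ha).symm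
  · rw [halfNormal_real_Ici_of_nonpos ha]
    refine tendsto_order.2 ⟨fun r hr => ?_,
      fun r hr => Eventually.of_forall fun n => measureReal_le_one.trans_lt hr⟩
    obtain ⟨b, hb, hcross⟩ := h.exists_eventually_lt_measureReal_crossing hr
    filter_upwards [hcross, eventually_ge_atTop 1] with n hcross hn
    rw [← h.measureReal_map_windowMax_div_Ici hn hb] at hcross
    exact hcross.trans_le (measureReal_mono (Set.Ici_subset_Ici.2 (ha.trans hb.le)))

theorem tendsto_dTV_map_windowMax_div_halfNormal (h : IsStandardIIDSeq X P)
    (hX : ∃ r, ¬ convPow (P.map (X 0)) r ⟂ₘ volume) :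
    Tendsto (fun n : ℕ => dTV (P.map fun ω => windowMax X 1 n ω / √n) halfNormal) atTop (𝓝 0) :=
  have (n : ℕ) : IsProbabilityMeasure (P.map fun ω => windowMax X 1 n ω / √n) :=
    Measure.isProbabilityMeasure_map ((h.measurable_windowMax 1 n).div_const _).aemeasurable
  tendsto_dTV_of_tendsto_measureReal_Ici halfNormal_absolutelyContinuous
    h.tendsto_measureReal_map_windowMax_div_Ici
    fun _ hε => h.exists_eventually_shiftTV_windowMax_le hX hε

end IsStandardIIDSeq

end TotalVariationConvergence

theorem stmt1_general {Ω : Type*} [MeasurableSpace Ω] {P : Measure Ω} [IsProbabilityMeasure P]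
    (X : ℕ → Ω → ℝ) (hmeas : ∀ i, Measurable (X i))
    (hindep : iIndepFun X P)
    (hident : ∀ i, P.map (X i) = P.map (X 0))
    (hsum : ∃ r, ¬ (P.map fun ω => ∑ i ∈ Finset.range r, X i ω) ⟂ₘ volume)
    (hmean : ∫ ω, X 0 ω ∂P = 0)
    (hvar : ∫ ω, X 0 ω ^ 2 ∂P = 1)
    (Sbar : ℕ → Ω → ℝ)
    (hSbar : ∀ n, ∀ hn : 1 ≤ n, ∀ ω, Sbar n ω =
      (Finset.Icc 1 n).sup' (Finset.nonempty_Icc.mpr hn)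
        (fun k => ∑ i ∈ Finset.range k, X i ω)) :
    Tendsto (fun n : ℕ => dTV (P.map fun ω => Sbar n ω / √n) halfNormal) atTop (𝓝 0) := by
  have h : IsStandardIIDSeq X P := ⟨⟨hmeas, hindep, hident⟩, hmean, hvar⟩
  have hX : ∃ r, ¬ convPow (P.map (X 0)) r ⟂ₘ volume :=
    hsum.imp fun r hr => h.map_walk r ▸ hr
  refine (h.tendsto_dTV_map_windowMax_div_halfNormal hX).congr' ?_
  filter_upwards [eventually_ge_atTop 1] with n hn
  have hmax : Sbar n = windowMax X 1 n := by
    ext ω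
    simp only [hSbar n hn, windowMax, max_eq_left hn, walk]
  rw [hmax]

/-- Total variation version of the Erdős–Kac theorem: for i.i.d. `X i` with a
Lebesgue density, mean `0` and variance `1`, the law of `S̄ n / √n` converges to
the one-sided standard normal law in total variation. -/
theorem stmt1 {Ω : Type*} [MeasureSpace Ω] [IsProbabilityMeasure (ℙ : Measure Ω)]
    (X : ℕ → Ω → ℝ) (hmeas : ∀ i, Measurable (X i))
    (hindep : iIndepFun X ℙ)
    (hident : ∀ i, Measure.map (X i) ℙ = Measure.map (X 0) ℙ)
    (hdensity : Measure.map (X 0) ℙ ≪ volume)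
    (hL2 : MemLp (X 0) 2 ℙ)
    (hmean : ∫ ω, X 0 ω ∂ℙ = 0)
    (hvar : ∫ ω, (X 0 ω) ^ 2 ∂ℙ = 1)
    (Sbar : ℕ → Ω → ℝ)
    (hSbar : ∀ n, ∀ hn : 1 ≤ n, ∀ ω, Sbar n ω =
      (Finset.Icc 1 n).sup' (Finset.nonempty_Icc.mpr hn)
        (fun k => ∑ i ∈ Finset.range k, X i ω)) :
    Tendsto (fun n => dTV (Measure.map (fun ω => Sbar n ω / Real.sqrt n) ℙ) halfNormal)
      atTop (nhds 0) := by
  have := Measure.isProbabilityMeasure_map (μ := ℙ) (hmeas 0).aemeasurable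
  have hsing := not_mutuallySingular_of_absolutelyContinuous hdensity
  exact stmt1_general X hmeas hindep hident ⟨1, by simpa only [Finset.sum_range_one] using hsing⟩
    hmean hvar Sbar hSbar
end

section
/- Let X₁, X₂, … be i.i.d. real random variables with a Lebesgue density, mean 0 and variance 1, and let S̄_n := max_{1≤k≤n} (X₁+…+X_k). Then D₊(S̄_{n₀} | |Z|) < ∞ for some n₀ ∈ ℕ if and only if D₊(S̄_1 | |Z|) = D₊(X₁ | |Z|) < ∞. -/
open MeasureTheory ProbabilityTheory Filter
open scoped ENNReal Classical

/-- The Kullback–Leibler divergence (relative entropy) `D(μ | ν)` of two measures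
on `ℝ`, with values in `[0,∞]`: it is `∫ log (dμ/dν) dμ` when `μ ≪ ν` and the
log-likelihood ratio is integrable, and `∞` otherwise. -/
noncomputable def KL (μ ν : Measure ℝ) : ℝ≥0∞ :=
  if μ ≪ ν ∧ Integrable (llr μ ν) μ then ENNReal.ofReal (∫ x, llr μ ν x ∂μ) else ⊤

/-- `D₊(U | |Z|)`: the relative entropy of `U` conditioned to be positive with
respect to the one-sided standard normal law. -/
noncomputable def Dplus {Ω : Type*} [MeasurableSpace Ω] (μ : Measure Ω) (U : Ω → ℝ) :
    ℝ≥0∞ :=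
  KL ((Measure.map U μ)[|Set.Ioi 0]) halfNormal

/-
If `X₁, …, X_{n-1} ≤ 0`, then the running maximum `S̄ₙ` is attained at time one and equals `X₀`. By
independence this event leaves the law of `X₀` intact, so the law of `S̄ₙ` dominates `c` times the
law of `X₀` with `c = ∏ ℙ(Xᵢ ≤ 0)`, and `c > 0` because the `Xᵢ` are centred. Conditioning on
positivity only changes such a bound by a constant factor, and finiteness of relative entropy with
respect to a finite measure passes from a measure to the measures it dominates: for `0 ≤ x ≤ y` the
convex integrand `φ(t) = t log t + 1 - t` satisfies `φ(x) ≤ max (φ 0) (φ y) ≤ 1 + φ y`.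
-/

open InformationTheory

section RelativeEntropy

variable {α : Type*} {mα : MeasurableSpace α} {μ ν γ : Measure α}

lemma klFun_le_one_add_klFun {x y : ℝ} (hx : 0 ≤ x) (hxy : x ≤ y) : klFun x ≤ 1 + klFun y :=
  calc klFun x ≤ max (klFun 0) (klFun y) :=
        convexOn_klFun.le_max_of_mem_Icc Set.self_mem_Ici (hx.trans hxy) ⟨hx, hxy⟩
    _ ≤ klFun 0 + klFun y :=
        max_le_add_of_nonneg (klFun_nonneg le_rfl) (klFun_nonneg (hx.trans hxy))
    _ = 1 + klFun y := by rw [klFun_zero]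

lemma rnDeriv_ae_le_rnDeriv_of_le [IsFiniteMeasure μ] [IsFiniteMeasure ν] [SigmaFinite γ]
    (h : μ ≤ ν) : μ.rnDeriv γ ≤ᵐ[γ] ν.rnDeriv γ := by
  have hadd := Measure.rnDeriv_add (ν - μ) μ γ
  rw [Measure.sub_add_cancel_of_le h] at hadd
  filter_upwards [hadd] with x hx
  rw [hx]
  exact le_add_self

lemma klDiv_le_measure_univ_add_klDiv_of_le [IsFiniteMeasure μ] [IsFiniteMeasure ν]
    [IsFiniteMeasure γ] (h : μ ≤ ν) : klDiv μ γ ≤ γ Set.univ + klDiv ν γ := by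
  by_cases hν : ν ≪ γ
  swap
  · simp [klDiv_of_not_ac hν]
  have hμ : μ ≪ γ := (Measure.absolutelyContinuous_of_le h).trans hν
  rw [klDiv_eq_lintegral_klFun_of_ac hμ, klDiv_eq_lintegral_klFun_of_ac hν, ← lintegral_one,
    ← lintegral_add_left measurable_const]
  refine lintegral_mono_ae ?_
  filter_upwards [rnDeriv_ae_le_rnDeriv_of_le h, ν.rnDeriv_lt_top γ] with x hle hlt
  rw [← ENNReal.ofReal_one, ← ENNReal.ofReal_add zero_le_one (klFun_nonneg ENNReal.toReal_nonneg)]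
  exact ENNReal.ofReal_le_ofReal <|
    klFun_le_one_add_klFun ENNReal.toReal_nonneg (ENNReal.toReal_mono hlt.ne hle)

lemma klDiv_smul_left_ne_top_iff [IsFiniteMeasure μ] [SigmaFinite γ] {c : ℝ≥0∞} (hc : c ≠ 0)
    (hc_top : c ≠ ⊤) : klDiv (c • μ) γ ≠ ⊤ ↔ klDiv μ γ ≠ ⊤ := by
  have hac : c • μ ≪ γ ↔ μ ≪ γ :=
    ⟨(Measure.absolutelyContinuous_smul hc).trans, fun h => h.smul_left c⟩
  rw [klDiv_ne_top_iff, klDiv_ne_top_iff, hac]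
  refine and_congr_right fun hμ => ?_
  rw [integrable_smul_measure hc hc_top, integrable_congr (llr_smul_left hμ c hc hc_top)]
  exact integrable_add_const_iff

lemma klDiv_cond_ne_top_iff [IsFiniteMeasure μ] [SigmaFinite γ] {s : Set α} (hs : μ s ≠ 0) :
    klDiv μ[|s] γ ≠ ⊤ ↔ klDiv (μ.restrict s) γ ≠ ⊤ :=
  klDiv_smul_left_ne_top_iff (ENNReal.inv_ne_zero.2 (measure_ne_top μ s)) (ENNReal.inv_ne_top.2 hs)

lemma klDiv_cond_ne_top_of_smul_le [IsFiniteMeasure μ] [IsFiniteMeasure ν] [IsFiniteMeasure γ]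
    {c : ℝ≥0∞} (hc : c ≠ 0) (hc_top : c ≠ ⊤) (hle : c • μ ≤ ν) {s : Set α} (hs : μ s ≠ 0)
    (h : klDiv ν[|s] γ ≠ ⊤) : klDiv μ[|s] γ ≠ ⊤ := by
  have hνs : ν s ≠ 0 := fun h0 => mul_ne_zero hc hs (le_zero_iff.1 (h0 ▸ hle s))
  have hrestrict : c • μ.restrict s ≤ ν.restrict s := by
    rw [← Measure.restrict_smul]
    exact Measure.restrict_mono le_rfl hle
  have := isFiniteMeasure_of_le _ hrestrict
  rw [klDiv_cond_ne_top_iff hνs] at h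
  rw [klDiv_cond_ne_top_iff hs, ← klDiv_smul_left_ne_top_iff hc hc_top]
  exact ne_top_of_le_ne_top (ENNReal.add_ne_top.2 ⟨measure_ne_top γ _, h⟩)
    (klDiv_le_measure_univ_add_klDiv_of_le hrestrict)

end RelativeEntropy

lemma KL_lt_top_iff {μ ν : Measure ℝ} : KL μ ν < ⊤ ↔ klDiv μ ν ≠ ⊤ := by
  rw [KL, klDiv_ne_top_iff]
  split_ifs with h <;> simp [h]

instance inst_s2 : IsProbabilityMeasure halfNormal :=
  Measure.isProbabilityMeasure_map (by fun_prop)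

section Probability

variable {Ω : Type*} {mΩ : MeasurableSpace Ω} {P : Measure Ω}

lemma map_Iic_integral_ne_zero [IsProbabilityMeasure P] {X : Ω → ℝ} (hX : Integrable X P) :
    P.map X (Set.Iic (∫ ω, X ω ∂P)) ≠ 0 := by
  rw [Measure.map_apply_of_aemeasurable hX.aemeasurable measurableSet_Iic]
  exact (measure_le_integral_pos hX).ne'

lemma map_Ioi_integral_ne_zero [IsProbabilityMeasure P] {X : Ω → ℝ} (hX : Integrable X P)
    (hatom : P.map X {∫ ω, X ω ∂P} = 0) : P.map X (Set.Ioi (∫ ω, X ω ∂P)) ≠ 0 := by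
  rw [measure_congr (Ioi_ae_eq_Ici' hatom),
    Measure.map_apply_of_aemeasurable hX.aemeasurable measurableSet_Ici]
  exact (measure_integral_le_pos hX).ne'

lemma prod_smul_map_le_map_of_iIndepFun {ι : Type*} {β : ι → Type*}
    {mβ : ∀ i, MeasurableSpace (β i)} {X : ∀ i, Ω → β i} (hX : ∀ i, AEMeasurable (X i) P)
    (hindep : iIndepFun X P) {i : ι} {s : Finset ι} (hi : i ∉ s) {B : ∀ j, Set (β j)}
    (hB : ∀ j ∈ s, MeasurableSet (B j)) {Y : Ω → β i} (hY : AEMeasurable Y P)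
    (hYX : ∀ ω, (∀ j ∈ s, X j ω ∈ B j) → Y ω = X i ω) :
    (∏ j ∈ s, P.map (X j) (B j)) • P.map (X i) ≤ P.map Y := by
  refine Measure.le_iff.2 fun A hA => ?_
  have hne {j : ι} (hj : j ∈ s) : j ≠ i := ne_of_mem_of_not_mem hj hi
  have hmul : P (X i ⁻¹' A ∩ ⋂ j ∈ s, X j ⁻¹' B j) = P (X i ⁻¹' A) * ∏ j ∈ s, P (X j ⁻¹' B j) := by
    have h := hindep.measure_inter_preimage_eq_mul (insert i s)
      (sets := Function.update B i A) (by
        rw [Finset.forall_mem_insert, Function.update_self]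
        exact ⟨hA, fun j hj => by rw [Function.update_of_ne (hne hj)]; exact hB j hj⟩)
    rw [Finset.set_biInter_insert, Finset.prod_insert hi, Function.update_self] at h
    convert h using 2
    · exact congrArg _ (Set.iInter₂_congr fun j hj => by rw [Function.update_of_ne (hne hj)])
    · exact Finset.prod_congr rfl fun j hj => by rw [Function.update_of_ne (hne hj)]
  calc (∏ j ∈ s, P.map (X j) (B j)) * P.map (X i) A
      = P (X i ⁻¹' A ∩ ⋂ j ∈ s, X j ⁻¹' B j) := by
        rw [hmul, mul_comm, Measure.map_apply_of_aemeasurable (hX i) hA]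
        exact congrArg _ (Finset.prod_congr rfl fun j hj =>
          Measure.map_apply_of_aemeasurable (hX j) (hB j hj))
    _ ≤ P (Y ⁻¹' A) := by
        refine measure_mono fun ω ⟨hωA, hωB⟩ => ?_
        rw [Set.mem_preimage, hYX ω (by simpa using hωB)]
        exact hωA
    _ = P.map Y A := (Measure.map_apply_of_aemeasurable hY hA).symm

end Probability

lemma sup'_Icc_sum_range_eq_of_nonpos {M : Type*} [AddCommMonoid M] [LinearOrder M]
    [IsOrderedAddMonoid M] {x : ℕ → M} {n : ℕ} (hn : 1 ≤ n) (hx : ∀ i ∈ Finset.Ico 1 n, x i ≤ 0) :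
    (Finset.Icc 1 n).sup' (Finset.nonempty_Icc.mpr hn) (fun k => ∑ i ∈ Finset.range k, x i)
      = x 0 := by
  refine le_antisymm (Finset.sup'_le _ _ fun k hk => ?_)
    (Finset.le_sup'_of_le _ (Finset.left_mem_Icc.2 hn) (by simp))
  obtain ⟨hk1, hkn⟩ := Finset.mem_Icc.1 hk
  rw [Finset.range_eq_Ico, Finset.sum_eq_sum_Ico_succ_bot hk1]
  exact add_le_of_nonpos_right <| Finset.sum_nonpos fun i hi =>
    hx i (Finset.Ico_subset_Ico_right hkn hi)

theorem stmt2_general {Ω : Type*} {mΩ : MeasurableSpace Ω} {P : Measure Ω} {γ : Measure ℝ}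
    [IsFiniteMeasure γ] {s : Set ℝ} (X : ℕ → Ω → ℝ) (hmeas : ∀ i, Measurable (X i))
    (hindep : iIndepFun X P) (hnonpos : ∀ i, 1 ≤ i → P.map (X i) (Set.Iic 0) ≠ 0)
    (hs : P.map (X 0) s ≠ 0) (Sbar : ℕ → Ω → ℝ)
    (hSbar : ∀ n, ∀ hn : 1 ≤ n, ∀ ω, Sbar n ω =
      (Finset.Icc 1 n).sup' (Finset.nonempty_Icc.mpr hn)
        (fun k => ∑ i ∈ Finset.range k, X i ω)) :
    KL (P.map (Sbar 1))[|s] γ = KL (P.map (X 0))[|s] γ ∧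
      ((∃ n, 1 ≤ n ∧ KL (P.map (Sbar n))[|s] γ < ⊤) ↔ KL (P.map (X 0))[|s] γ < ⊤) := by
  have := hindep.isProbabilityMeasure
  have hSbar_one : Sbar 1 = X 0 := funext fun ω => by simp [hSbar 1 le_rfl]
  refine ⟨by rw [hSbar_one], ?_, fun h => ⟨1, le_rfl, by rwa [hSbar_one]⟩⟩
  rintro ⟨n, hn, h⟩
  have hSbar_meas : Measurable (Sbar n) := by
    have hsup : Sbar n = (Finset.Icc 1 n).sup' (Finset.nonempty_Icc.mpr hn)
        (fun k ω => ∑ i ∈ Finset.range k, X i ω) :=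
      funext fun ω => by rw [hSbar n hn, Finset.sup'_apply]
    exact hsup ▸ Finset.measurable_sup' _ fun k _ => Finset.measurable_fun_sum _ fun i _ => hmeas i
  have hdom : (∏ i ∈ Finset.Ico 1 n, P.map (X i) (Set.Iic 0)) • P.map (X 0) ≤ P.map (Sbar n) :=
    prod_smul_map_le_map_of_iIndepFun (fun i => (hmeas i).aemeasurable) hindep (by simp)
      (fun _ _ => measurableSet_Iic) hSbar_meas.aemeasurable
      fun ω hω => (hSbar n hn ω).trans (sup'_Icc_sum_range_eq_of_nonpos hn hω)
  rw [KL_lt_top_iff] at h ⊢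
  exact klDiv_cond_ne_top_of_smul_le
    (Finset.prod_ne_zero_iff.2 fun i hi => hnonpos i (Finset.mem_Ico.1 hi).1)
    (ENNReal.prod_ne_top fun i _ => measure_ne_top _ _) hdom hs h

/-- `D₊(S̄ n₀ | |Z|) < ∞` for some `n₀ ≥ 1` iff it holds for `n₀ = 1`, i.e. iff
`D₊(X 0 | |Z|) < ∞` (note `S̄ 1 = X 0`, so `D₊(S̄ 1 | |Z|) = D₊(X 0 | |Z|)`). -/
theorem stmt2 {Ω : Type*} [MeasureSpace Ω] [IsProbabilityMeasure (ℙ : Measure Ω)]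
    (X : ℕ → Ω → ℝ) (hmeas : ∀ i, Measurable (X i))
    (hindep : iIndepFun X ℙ)
    (hident : ∀ i, Measure.map (X i) ℙ = Measure.map (X 0) ℙ)
    (hdensity : Measure.map (X 0) ℙ ≪ volume)
    (hL2 : MemLp (X 0) 2 ℙ)
    (hmean : ∫ ω, X 0 ω ∂ℙ = 0)
    (hvar : ∫ ω, (X 0 ω) ^ 2 ∂ℙ = 1)
    (Sbar : ℕ → Ω → ℝ)
    (hSbar : ∀ n, ∀ hn : 1 ≤ n, ∀ ω, Sbar n ω =
      (Finset.Icc 1 n).sup' (Finset.nonempty_Icc.mpr hn)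
        (fun k => ∑ i ∈ Finset.range k, X i ω)) :
    Dplus ℙ (Sbar 1) = Dplus ℙ (X 0) ∧
      ((∃ n₀, 1 ≤ n₀ ∧ Dplus ℙ (Sbar n₀) < ⊤) ↔ Dplus ℙ (X 0) < ⊤) := by
  have hX := hL2.integrable one_le_two
  exact stmt2_general X hmeas hindep
    (fun i _ => hident i ▸ hmean ▸ map_Iic_integral_ne_zero hX)
    (hmean ▸ map_Ioi_integral_ne_zero hX (hdensity (measure_singleton _))) Sbar hSbar
end

section
/- Let ψ be a positive probability density on (0,∞), let α₁, …, α_n be positive real numbers, and let f₁, …, f_n be non-negative measurable functions with ∫₀^∞ f_k(x) dx < ∞ for k = 1, …, n. Then D(Σ_{k=1}^n α_k f_k | ψ) ≤ Σ_{k=1}^n α_k·D(f_k | ψ) + (log Σ_{k=1}^n α_k)·Σ_{k=1}^n α_k·∫₀^∞ f_k(x) dx. -/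
open MeasureTheory Set
open scoped ENNReal

/-- `L x = x * log x` (with `L 0 = 0`, automatic since `Real.log 0 = 0`). -/
noncomputable def L (x : ℝ) : ℝ := x * Real.log x

/-- The relative entropy `D(f | ψ) = ∫₀^∞ L (f x / ψ x) * ψ x dx`, with values in
`(-∞, ∞]`, realized in `EReal`.  Since `L t ≥ -e⁻¹` for `t ≥ 0`, for a probability
density `ψ` on `(0,∞)` the integrand shifted by `e⁻¹ * ψ` is nonnegative, so this
is faithfully computed by a Lebesgue integral shifted back by `e⁻¹`. -/
noncomputable def relEnt (f ψ : ℝ → ℝ) : EReal :=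
  ((∫⁻ x in Ioi (0 : ℝ),
      ENNReal.ofReal (L (f x / ψ x) * ψ x + Real.exp (-1) * ψ x) : ℝ≥0∞) : EReal)
    - ((Real.exp (-1) : ℝ) : EReal)

/-!
Put `A = ∑ α k`. Jensen's inequality for the convex function `L` with weights `α k / A`, combined
with `L (x y) = y L x + x L y`, gives `L (∑ α k g k) ≤ ∑ α k L (g k) + log A ∑ α k g k` for
`g k ≥ 0`. Take `g k = f k / ψ`, multiply by `ψ` and integrate. Since `L ≥ -e⁻¹` on `[0, ∞)`, no
relative entropy is `-∞`, so if one of the `D(f k | ψ)` is infinite, then so is the right-hand side.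
-/

section Pointwise

lemma L_apply_mul (x y : ℝ) : L (x * y) = y * L x + x * L y := by
  have h := Real.negMulLog_mul x y
  simp only [Real.negMulLog] at h
  simp only [L]
  linarith

lemma continuous_L : Continuous L := Real.continuous_mul_log

lemma convexOn_L : ConvexOn ℝ (Ici 0) L := Real.convexOn_mul_log

lemma neg_exp_neg_one_le_L {x : ℝ} (hx : 0 ≤ x) : -Real.exp (-1) ≤ L x := by
  rcases hx.eq_or_lt with rfl | hx
  · simp [L, Real.exp_nonneg]
  · have h := Real.mul_exp_neg_le_exp_neg_one (-Real.log x)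
    rw [neg_neg, Real.exp_log hx] at h
    simp only [L]
    linarith

variable {ι : Type*} {s : Finset ι} {α : ι → ℝ}

lemma L_sum_mul_le {g : ι → ℝ} (hα : ∀ k ∈ s, 0 ≤ α k) (hg : ∀ k ∈ s, 0 ≤ g k) :
    L (∑ k ∈ s, α k * g k)
      ≤ ∑ k ∈ s, α k * L (g k) + Real.log (∑ k ∈ s, α k) * ∑ k ∈ s, α k * g k := by
  set A := ∑ k ∈ s, α k
  have hA : 0 ≤ A := Finset.sum_nonneg hα
  rcases hA.eq_or_lt with hA0 | hApos
  · have hα0 : ∀ k ∈ s, α k = 0 := (Finset.sum_eq_zero_iff_of_nonneg hα).1 hA0.symm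
    have hsum (u : ι → ℝ) : ∑ k ∈ s, α k * u k = 0 :=
      Finset.sum_eq_zero fun k hk => by rw [hα0 k hk, zero_mul]
    simp [hsum, L]
  · have average (u : ι → ℝ) : A * ∑ k ∈ s, α k / A * u k = ∑ k ∈ s, α k * u k := by
      rw [Finset.mul_sum]
      exact Finset.sum_congr rfl fun k _ => by rw [← mul_assoc, mul_div_cancel₀ _ hApos.ne']
    have jensen : L (∑ k ∈ s, α k / A * g k) ≤ ∑ k ∈ s, α k / A * L (g k) :=
      convexOn_L.map_sum_le (fun k hk => div_nonneg (hα k hk) hApos.le)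
        (by rw [← Finset.sum_div, div_self hApos.ne']) hg
    calc L (∑ k ∈ s, α k * g k)
        = A * L (∑ k ∈ s, α k / A * g k)
            + Real.log A * (A * ∑ k ∈ s, α k / A * g k) := by
          rw [← average g, L_apply_mul, L.eq_def A]
          ring
      _ ≤ A * ∑ k ∈ s, α k / A * L (g k)
            + Real.log A * (A * ∑ k ∈ s, α k / A * g k) := by gcongr
      _ = ∑ k ∈ s, α k * L (g k) + Real.log A * ∑ k ∈ s, α k * g k := by
          rw [average, average]

/-- The perspective `(a, b) ↦ b L(a / b)` of `L`, whose integral along a pair of densities is their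
relative entropy; it is meant for `0 ≤ a` and `0 < b`. -/
noncomputable def relEntIntegrand (a b : ℝ) : ℝ := L (a / b) * b

lemma relEntIntegrand_add_nonneg {a b : ℝ} (ha : 0 ≤ a) (hb : 0 ≤ b) :
    0 ≤ relEntIntegrand a b + Real.exp (-1) * b := by
  rw [relEntIntegrand, ← add_mul]
  exact mul_nonneg (neg_le_iff_add_nonneg.1 (neg_exp_neg_one_le_L (div_nonneg ha hb))) hb

lemma relEntIntegrand_sum_mul_le {a : ι → ℝ} {b : ℝ} (hα : ∀ k ∈ s, 0 ≤ α k)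
    (ha : ∀ k ∈ s, 0 ≤ a k) (hb : 0 < b) :
    relEntIntegrand (∑ k ∈ s, α k * a k) b
      ≤ ∑ k ∈ s, α k * relEntIntegrand (a k) b
        + Real.log (∑ k ∈ s, α k) * ∑ k ∈ s, α k * a k := by
  have h := mul_le_mul_of_nonneg_right
    (L_sum_mul_le hα fun k hk => div_nonneg (ha k hk) hb.le) hb.le
  simpa only [relEntIntegrand, add_mul, mul_assoc, Finset.sum_mul, Finset.sum_div, mul_div_assoc,
    div_mul_cancel₀ _ hb.ne'] using h

end Pointwise

section ExtendedReals

variable {ι : Type*} {s : Finset ι}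

lemma ereal_coe_sum (s : Finset ι) (v : ι → ℝ) :
    ((∑ k ∈ s, v k : ℝ) : EReal) = ∑ k ∈ s, (v k : EReal) :=
  map_sum (⟨⟨Real.toEReal, EReal.coe_zero⟩, EReal.coe_add⟩ : ℝ →+ EReal) v s

lemma ereal_sum_ne_bot {v : ι → EReal} (hv : ∀ k ∈ s, v k ≠ ⊥) : ∑ k ∈ s, v k ≠ ⊥ :=
  Finset.sum_induction v (· ≠ ⊥) (fun _ _ hx hy => EReal.add_ne_bot_iff.2 ⟨hx, hy⟩)
    EReal.zero_ne_bot hv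

lemma ereal_sum_eq_top {v : ι → EReal} (hv : ∀ k ∈ s, v k ≠ ⊥) {j : ι} (hj : j ∈ s)
    (hvj : v j = ⊤) : ∑ k ∈ s, v k = ⊤ := by
  classical
  rw [← Finset.add_sum_erase s v hj, hvj]
  exact EReal.top_add_of_ne_bot (ereal_sum_ne_bot fun k hk => hv k (Finset.mem_of_mem_erase hk))

end ExtendedReals

section RelEntropy

variable {X : Type*} [MeasurableSpace X] {μ : Measure X} {f ψ : X → ℝ}

/-- The relative entropy `D(f | ψ) = ∫ L(f / ψ) ψ dμ ∈ (-∞, ∞]` of `f ≥ 0` with respect to a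
positive integrable function `ψ` of any mass. As in `relEnt`, the integrand is made nonnegative by
adding `e⁻¹ ψ`, whose integral is subtracted again. -/
noncomputable def relEntropy (μ : Measure X) (f ψ : X → ℝ) : EReal :=
  ((∫⁻ x, ENNReal.ofReal (relEntIntegrand (f x) (ψ x) + Real.exp (-1) * ψ x) ∂μ : ℝ≥0∞) : EReal)
    - ((Real.exp (-1) * ∫ x, ψ x ∂μ : ℝ) : EReal)

lemma relEnt_eq_relEntropy {ψ : ℝ → ℝ} (hψprob : ∫ x in Ioi (0 : ℝ), ψ x = 1) (f : ℝ → ℝ) :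
    relEnt f ψ = relEntropy (volume.restrict (Ioi 0)) f ψ := by
  simp only [relEnt, relEntropy, relEntIntegrand, hψprob, mul_one]

lemma relEntropy_ne_bot (μ : Measure X) (f ψ : X → ℝ) : relEntropy μ f ψ ≠ ⊥ := by
  rw [relEntropy, sub_eq_add_neg, ← EReal.coe_neg]
  exact EReal.add_ne_bot_iff.2 ⟨EReal.coe_ennreal_ne_bot _, EReal.coe_ne_bot _⟩

lemma aemeasurable_relEntIntegrand (hf : AEMeasurable f μ) (hψ : AEMeasurable ψ μ) :
    AEMeasurable (fun x => relEntIntegrand (f x) (ψ x)) μ :=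
  (continuous_L.measurable.comp_aemeasurable (hf.div hψ)).mul hψ

lemma ae_relEntIntegrand_add_nonneg (hf0 : 0 ≤ᵐ[μ] f) (hψ0 : 0 ≤ᵐ[μ] ψ) :
    0 ≤ᵐ[μ] fun x => relEntIntegrand (f x) (ψ x) + Real.exp (-1) * ψ x := by
  filter_upwards [hf0, hψ0] with x hfx hψx using relEntIntegrand_add_nonneg hfx hψx

lemma relEntropy_eq_integral (hψ : Integrable ψ μ) (hψ0 : 0 ≤ᵐ[μ] ψ) (hf0 : 0 ≤ᵐ[μ] f)
    (h : Integrable (fun x => relEntIntegrand (f x) (ψ x)) μ) :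
    relEntropy μ f ψ = ((∫ x, relEntIntegrand (f x) (ψ x) ∂μ : ℝ) : EReal) := by
  have hnonneg := ae_relEntIntegrand_add_nonneg hf0 hψ0
  have hψe : Integrable (fun x => Real.exp (-1) * ψ x) μ := hψ.const_mul _
  rw [relEntropy, ← ofReal_integral_eq_lintegral_ofReal (h.fun_add hψe) hnonneg,
    EReal.coe_ennreal_ofReal, max_eq_left (integral_nonneg_of_ae hnonneg), ← EReal.coe_sub,
    integral_add h hψe, integral_const_mul, add_sub_cancel_right]

lemma relEntropy_eq_top (hψ : Integrable ψ μ) (hψ0 : 0 ≤ᵐ[μ] ψ) (hf : AEMeasurable f μ)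
    (hf0 : 0 ≤ᵐ[μ] f) (h : ¬ Integrable (fun x => relEntIntegrand (f x) (ψ x)) μ) :
    relEntropy μ f ψ = ⊤ := by
  have hψe : Integrable (fun x => Real.exp (-1) * ψ x) μ := hψ.const_mul _
  have hmeas := (aemeasurable_relEntIntegrand hf hψ.aemeasurable).add hψe.aemeasurable
  have htop : ∫⁻ x, ENNReal.ofReal (relEntIntegrand (f x) (ψ x) + Real.exp (-1) * ψ x) ∂μ = ⊤ := by
    by_contra hne
    have hsum := (lintegral_ofReal_ne_top_iff_integrable hmeas.aestronglyMeasurable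
      (ae_relEntIntegrand_add_nonneg hf0 hψ0)).1 hne
    exact h ((integrable_add_iff_integrable_left' hψe).1 hsum)
  rw [relEntropy, htop, EReal.coe_ennreal_top, EReal.top_sub_coe]

lemma relEntropy_le_integral {B : X → ℝ} (hψ : Integrable ψ μ) (hψ0 : 0 ≤ᵐ[μ] ψ)
    (hf : AEMeasurable f μ) (hf0 : 0 ≤ᵐ[μ] f) (hB : Integrable B μ)
    (hle : (fun x => relEntIntegrand (f x) (ψ x)) ≤ᵐ[μ] B) :
    relEntropy μ f ψ ≤ ((∫ x, B x ∂μ : ℝ) : EReal) := by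
  have hlower : (fun x => -(Real.exp (-1) * ψ x)) ≤ᵐ[μ] fun x => relEntIntegrand (f x) (ψ x) := by
    filter_upwards [ae_relEntIntegrand_add_nonneg hf0 hψ0] with x hx
      using neg_le_iff_add_nonneg.2 hx
  have hint : Integrable (fun x => relEntIntegrand (f x) (ψ x)) μ :=
    integrable_of_le_of_le (aemeasurable_relEntIntegrand hf hψ.aemeasurable).aestronglyMeasurable
      hlower hle (hψ.const_mul _).neg hB
  rw [relEntropy_eq_integral hψ hψ0 hf0 hint, EReal.coe_le_coe_iff]
  exact integral_mono_ae hint hB hle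

variable {ι : Type*} {s : Finset ι} {α : ι → ℝ} {F : ι → X → ℝ}

lemma relEntropy_sum_le_of_integrable (hψ : Integrable ψ μ) (hψpos : ∀ᵐ x ∂μ, 0 < ψ x)
    (hα : ∀ k ∈ s, 0 ≤ α k) (hF : ∀ k ∈ s, Integrable (F k) μ) (hF0 : ∀ k ∈ s, 0 ≤ᵐ[μ] F k)
    (hint : ∀ k ∈ s, Integrable (fun x => relEntIntegrand (F k x) (ψ x)) μ) :
    relEntropy μ (fun x => ∑ k ∈ s, α k * F k x) ψ
      ≤ (∑ k ∈ s, (α k : EReal) * relEntropy μ (F k) ψ)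
        + ((Real.log (∑ k ∈ s, α k) * ∑ k ∈ s, α k * ∫ x, F k x ∂μ : ℝ) : EReal) := by
  have hψ0 : 0 ≤ᵐ[μ] ψ := hψpos.mono fun _ => le_of_lt
  have hF0' : ∀ᵐ x ∂μ, ∀ k ∈ s, 0 ≤ F k x := (ae_ball_iff s.countable_toSet).2 hF0
  have hmix : Integrable (fun x => ∑ k ∈ s, α k * F k x) μ :=
    integrable_finsetSum s fun k hk => (hF k hk).const_mul _
  have hmix0 : 0 ≤ᵐ[μ] fun x => ∑ k ∈ s, α k * F k x := by
    filter_upwards [hF0'] with x hx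
      using Finset.sum_nonneg fun k hk => mul_nonneg (hα k hk) (hx k hk)
  have hent : Integrable (fun x => ∑ k ∈ s, α k * relEntIntegrand (F k x) (ψ x)) μ :=
    integrable_finsetSum s fun k hk => (hint k hk).const_mul _
  have hlog := hmix.const_mul (Real.log (∑ k ∈ s, α k))
  have hle : ∀ᵐ x ∂μ, relEntIntegrand (∑ k ∈ s, α k * F k x) (ψ x)
      ≤ ∑ k ∈ s, α k * relEntIntegrand (F k x) (ψ x)
        + Real.log (∑ k ∈ s, α k) * ∑ k ∈ s, α k * F k x := by
    filter_upwards [hF0', hψpos] with x hx hψx using relEntIntegrand_sum_mul_le hα hx hψx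
  refine (relEntropy_le_integral hψ hψ0 hmix.aemeasurable hmix0 (hent.add hlog) hle).trans_eq ?_
  have hsum : ∑ k ∈ s, (α k : EReal) * relEntropy μ (F k) ψ
      = ((∑ k ∈ s, α k * ∫ x, relEntIntegrand (F k x) (ψ x) ∂μ : ℝ) : EReal) := by
    rw [ereal_coe_sum]
    refine Finset.sum_congr rfl fun k hk => ?_
    rw [relEntropy_eq_integral hψ hψ0 (hF0 k hk) (hint k hk), EReal.coe_mul]
  rw [hsum, ← EReal.coe_add, integral_add' hent hlog, integral_const_mul,
    integral_finsetSum s fun k hk => (hint k hk).const_mul _,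
    integral_finsetSum s fun k hk => (hF k hk).const_mul _]
  simp only [integral_const_mul]

theorem stmt4_general (hψ : Integrable ψ μ) (hψpos : ∀ᵐ x ∂μ, 0 < ψ x)
    (hα : ∀ k ∈ s, 0 < α k) (hF : ∀ k ∈ s, Integrable (F k) μ) (hF0 : ∀ k ∈ s, 0 ≤ᵐ[μ] F k) :
    relEntropy μ (fun x => ∑ k ∈ s, α k * F k x) ψ
      ≤ (∑ k ∈ s, (α k : EReal) * relEntropy μ (F k) ψ)
        + ((Real.log (∑ k ∈ s, α k) * ∑ k ∈ s, α k * ∫ x, F k x ∂μ : ℝ) : EReal) := by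
  by_cases hint : ∀ k ∈ s, Integrable (fun x => relEntIntegrand (F k x) (ψ x)) μ
  · exact relEntropy_sum_le_of_integrable hψ hψpos (fun k hk => (hα k hk).le) hF hF0 hint
  · push Not at hint
    obtain ⟨j, hj, hj_int⟩ := hint
    have hj_top : (α j : EReal) * relEntropy μ (F j) ψ = ⊤ := by
      rw [relEntropy_eq_top hψ (hψpos.mono fun _ => le_of_lt) (hF j hj).aemeasurable (hF0 j hj)
        hj_int, EReal.coe_mul_top_of_pos (hα j hj)]
    have hbot : ∀ k ∈ s, (α k : EReal) * relEntropy μ (F k) ψ ≠ ⊥ := fun k hk => by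
      have hαk : (0 : EReal) ≤ α k := EReal.coe_nonneg.2 (hα k hk).le
      simp [EReal.mul_eq_bot, relEntropy_ne_bot, hαk.not_gt]
    rw [ereal_sum_eq_top hbot hj hj_top, EReal.top_add_coe]
    exact le_top

end RelEntropy

theorem stmt4 (ψ : ℝ → ℝ) (hψmeas : Measurable ψ)
    (hψpos : ∀ x ∈ Ioi (0 : ℝ), 0 < ψ x)
    (hψint : IntegrableOn ψ (Ioi (0 : ℝ)))
    (hψprob : ∫ x in Ioi (0 : ℝ), ψ x = 1)
    (n : ℕ) (α : Fin n → ℝ) (hα : ∀ k, 0 < α k)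
    (f : Fin n → ℝ → ℝ) (hfmeas : ∀ k, Measurable (f k))
    (hf0 : ∀ k x, 0 ≤ f k x)
    (hfint : ∀ k, IntegrableOn (f k) (Ioi (0 : ℝ))) :
    relEnt (fun x => ∑ k, α k * f k x) ψ
      ≤ (∑ k, (α k : EReal) * relEnt (f k) ψ)
        + ((Real.log (∑ k, α k) * ∑ k, α k * ∫ x in Ioi (0 : ℝ), f k x : ℝ) : EReal) := by
  simp only [relEnt_eq_relEntropy hψprob]
  exact stmt4_general hψint (ae_restrict_of_forall_mem measurableSet_Ioi hψpos)
    (fun k _ => hα k) (fun k _ => hfint k) fun k _ => ae_of_all _ (hf0 k)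
end
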